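/- Let X = {0,1}^ℕ with the shift T, let W = {w_i}_{i∈I} (I ⊆ ℕ) be a finite or countable set of finite words, and let a = (a_i)_{i∈I} be non-negative numbers. Then the Bowen topological entropy of the recurrence set R(a;W) = {x ∈ X : R(x,[w_i]) = a_i for all i ∈ I} equals the maximum of h_μ over the set M(a,W) of T-invariant Borel probability measures μ with μ([w_i]) = a_i for all i ∈ I, the maximum being attained when M(a,W) is nonempty. -/

import Mathlib

open MeasureTheory Filter Topology Set
open scoped ENNReal NNReal

/-!  General definitions: Bowen topological entropy (via covers by Bowen balls),
measure-theoretic (Kolmogorov–Sinai) entropy, generic points, saturated systems,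
and the specification property. -/

variable {X : Type*}

/-- The Bowen ball of center `x`, order `n`, radius `ε` (for the metric
`d_n(x,y) = max_{0 ≤ j < n} d(T^j x, T^j y)`). -/
def bowenBall [PseudoMetricSpace X] (T : X → X) (x : X) (n : ℕ) (ε : ℝ) : Set X :=
  {y | ∀ j < n, dist (T^[j] x) (T^[j] y) < ε}

/-- `H_n^s(Z,ε)`: infimum of `Σ_i exp(-s n_i)` over countable covers of `Z` by Bowen balls
`B_{n_i}(x_i,ε)` with all `n_i ≥ n`. -/
noncomputable def bowenH [PseudoMetricSpace X] (T : X → X) (Z : Set X) (s ε : ℝ) (n : ℕ) :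
    ℝ≥0∞ :=
  ⨅ (C : Set (X × ℕ)) (_ : C.Countable) (_ : ∀ p ∈ C, n ≤ p.2)
    (_ : Z ⊆ ⋃ p ∈ C, bowenBall T p.1 p.2 ε),
    ∑' p : C, ENNReal.ofReal (Real.exp (-s * ((p : X × ℕ).2 : ℝ)))

/-- `h_top(Z,ε)`: the critical exponent of `s ↦ H^s(Z,ε) = sup_n H_n^s(Z,ε)`. -/
noncomputable def bowenEntropyRes [PseudoMetricSpace X] (T : X → X) (Z : Set X) (ε : ℝ) :
    ℝ≥0∞ :=
  sInf ((fun s : ℝ≥0 => (s : ℝ≥0∞)) '' {s : ℝ≥0 | (⨆ n, bowenH T Z (s : ℝ) ε n) = 0})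

/-- Bowen topological entropy of a subset `Z`: `h_top(Z) = lim_{ε → 0} h_top(Z,ε)`
(the limit being a supremum by monotonicity in `ε`). -/
noncomputable def bowenEntropy [PseudoMetricSpace X] (T : X → X) (Z : Set X) : ℝ≥0∞ :=
  ⨆ (ε : ℝ) (_ : 0 < ε), bowenEntropyRes T Z ε

/-- Entropy of the partition `P ∨ T⁻¹P ∨ ⋯ ∨ T⁻⁽ⁿ⁻¹⁾P`, where a countable partition is
encoded as a function `P : X → ℕ`: it is the Shannon entropy of the map
`x ↦ (P x, P (T x), …, P (Tⁿ⁻¹ x))`. -/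
noncomputable def partInfo [MeasurableSpace X] (T : X → X) (μ : Measure X) (P : X → ℕ)
    (n : ℕ) : ℝ≥0∞ :=
  ∑' l : List ℕ, ENNReal.ofReal (Real.negMulLog
    ((μ ((fun x => (List.range n).map fun j => P (T^[j] x)) ⁻¹' {l})).toReal))

/-- Measure-theoretic (Kolmogorov–Sinai) entropy `h_μ(T)`: supremum over finite measurable
partitions `P` of `lim_n (1/n) H_μ(P ∨ T⁻¹P ∨ ⋯ ∨ T⁻⁽ⁿ⁻¹⁾P)` (the limit exists by
subadditivity, so it may be written as a `liminf`). -/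
noncomputable def ksEntropy [MeasurableSpace X] (T : X → X) (μ : Measure X) : ℝ≥0∞ :=
  ⨆ (P : X → ℕ) (_ : Measurable P) (_ : (Set.range P).Finite),
    Filter.atTop.liminf fun n : ℕ => partInfo T μ P n / (n : ℝ≥0∞)

/-- `x` is a generic point for `μ` : the empirical measures `(1/n) Σ_{j<n} δ_{T^j x}`
converge to `μ` in the weak-star topology, i.e. Birkhoff averages of every continuous
function converge to its integral. -/
def IsGeneric [TopologicalSpace X] [MeasurableSpace X] (T : X → X) (μ : Measure X)
    (x : X) : Prop :=
  ∀ f : C(X, ℝ), Tendsto (fun n : ℕ => (∑ j ∈ Finset.range n, f (T^[j] x)) / (n : ℝ))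
    atTop (𝓝 (∫ y, f y ∂μ))

/-- `μ ∈ V(x)` : `μ` is a weak-star limit point of the empirical measures of `x`. -/
def IsLimitMeasure [TopologicalSpace X] [MeasurableSpace X] (T : X → X) (x : X)
    (μ : Measure X) : Prop :=
  ∃ φ : ℕ → ℕ, StrictMono φ ∧ ∀ f : C(X, ℝ),
    Tendsto (fun m : ℕ => (∑ j ∈ Finset.range (φ m), f (T^[j] x)) / (φ m : ℝ))
      atTop (𝓝 (∫ y, f y ∂μ))

/-- A system is saturated if `h_top(G_μ) = h_μ` for every invariant Borel probability
measure `μ`. -/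
def Saturated [PseudoMetricSpace X] [MeasurableSpace X] (T : X → X) : Prop :=
  ∀ μ : Measure X, IsProbabilityMeasure μ → MeasurePreserving T μ μ →
    bowenEntropy T {x | IsGeneric T μ x} = ksEntropy T μ

/-- The specification property. -/
def SpecificationProperty [PseudoMetricSpace X] (T : X → X) : Prop :=
  ∀ ε : ℝ, 0 < ε → ∃ m : ℕ, 1 ≤ m ∧
    ∀ k : ℕ, 2 ≤ k → ∀ x : ℕ → X, ∀ a b : ℕ → ℕ,
      (∀ i < k, a i ≤ b i) →
      (∀ i, i + 1 < k → b i + m ≤ a (i + 1)) →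
      ∃ y : X, ∀ i < k, ∀ n ≤ b i - a i,
        dist (T^[a i + n] y) (T^[n] (x i)) < ε

/-! Symbolic dynamics on `X = {0,1}^ℕ`. -/

/-- The metric `d(x,y) = (1/2)^(first difference)` on the symbolic space `{0,1}^ℕ`. -/
noncomputable instance : MetricSpace (ℕ → Bool) := PiNat.metricSpace

/-- The shift map on `{0,1}^ℕ`. -/
def shift : (ℕ → Bool) → ℕ → Bool := fun x n => x (n + 1)

/-- The cylinder `[w]` of all sequences beginning with the finite word `w`. -/
def cyl (w : List Bool) : Set (ℕ → Bool) :=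
  {x | ∀ i : Fin w.length, x i.1 = w.get i}

/-- `R(x,[w]) = r` : the frequency of visits of the orbit of `x` to the cylinder `[w]`
exists and equals `r`. -/
def hasFreq (w : List Bool) (x : ℕ → Bool) (r : ℝ) : Prop :=
  Filter.Tendsto (fun n : ℕ =>
      (∑ j ∈ Finset.range n, (cyl w).indicator (fun _ => (1 : ℝ)) (shift^[j] x)) / (n : ℝ))
    Filter.atTop (nhds r)


section Shannon

variable {Ω A B : Type*} [MeasurableSpace Ω]

/-- Shannon entropy of (the law of) a map with countably many values. -/
noncomputable def shannon (μ : Measure Ω) (f : Ω → A) : ℝ≥0∞ :=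
  ∑' a, ENNReal.ofReal (Real.negMulLog (μ (f ⁻¹' {a})).toReal)

lemma ofReal_negMulLog_toReal (p : ℝ≥0∞) (hp : p ≠ ∞) :
    ENNReal.ofReal (Real.negMulLog p.toReal) = p * ENNReal.ofReal (-Real.log p.toReal) := by
  rw [Real.negMulLog, neg_mul_comm, ENNReal.ofReal_mul ENNReal.toReal_nonneg,
    ENNReal.ofReal_toReal hp]

lemma tsum_measure_fiber_inter (μ : Measure Ω) [Countable A] [MeasurableSpace A]
    [DiscreteMeasurableSpace A] {f : Ω → A} (hf : Measurable f) {s : Set Ω}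
    (hs : MeasurableSet s) : ∑' a, μ (f ⁻¹' {a} ∩ s) = μ s := by
  have h := measure_iUnion (μ := μ) (f := fun a => f ⁻¹' {a} ∩ s) ?_ ?_
  · rw [← h]
    congr 1
    ext x
    simp
  · intro a b hab
    rw [Function.onFun, Set.disjoint_left]
    rintro x ⟨hx, _⟩ ⟨hy, _⟩
    exact hab (hx.symm.trans hy)
  · exact fun a => (hf (MeasurableSet.of_discrete)).inter hs

lemma shannon_comp_le (μ : Measure Ω) [IsProbabilityMeasure μ] [Countable A] [MeasurableSpace A]
    [DiscreteMeasurableSpace A] {f : Ω → A} (hf : Measurable f) (g : A → B) :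
    shannon μ (g ∘ f) ≤ shannon μ f := by
  classical
  have hp (b : B) : μ (g ∘ f ⁻¹' {b}) = ∑' a, if g a = b then μ (f ⁻¹' {a}) else 0 := by
    have hm : MeasurableSet (g ∘ f ⁻¹' {b}) := hf (MeasurableSet.of_discrete (s := g ⁻¹' {b}))
    rw [← tsum_measure_fiber_inter μ hf hm]
    refine tsum_congr fun a => ?_
    split_ifs with h
    · congr 1
      ext x
      simp only [mem_inter_iff, mem_preimage, mem_singleton_iff, Function.comp]
      exact ⟨fun hx => hx.1, fun hx => ⟨hx, hx ▸ h⟩⟩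
    · convert measure_empty (μ := μ)
      ext x
      simp only [mem_inter_iff, mem_preimage, mem_singleton_iff, Function.comp]
      simp only [mem_empty_iff_false, iff_false]
      rintro ⟨rfl, h'⟩
      exact h h'
  unfold shannon
  calc ∑' b, ENNReal.ofReal (Real.negMulLog (μ (g ∘ f ⁻¹' {b})).toReal)
      = ∑' b, ∑' a, if g a = b then
          μ (f ⁻¹' {a}) * ENNReal.ofReal (-Real.log (μ (g ∘ f ⁻¹' {b})).toReal) else 0 := by
        refine tsum_congr fun b => ?_
        rw [ofReal_negMulLog_toReal _ (measure_ne_top _ _)]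
        nth_rewrite 1 [hp b]
        rw [← ENNReal.tsum_mul_right]
        refine tsum_congr fun a => ?_
        split_ifs <;> simp
    _ ≤ ∑' b, ∑' a, if g a = b then
          ENNReal.ofReal (Real.negMulLog (μ (f ⁻¹' {a})).toReal) else 0 := by
        refine ENNReal.tsum_le_tsum fun b => ENNReal.tsum_le_tsum fun a => ?_
        split_ifs with h
        · rw [ofReal_negMulLog_toReal _ (measure_ne_top _ _)]
          rcases eq_or_ne (μ (f ⁻¹' {a})) 0 with h0 | h0
          · simp [h0]
          · gcongr
            · exact ENNReal.toReal_pos h0 (measure_ne_top _ _)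
            · exact measure_ne_top _ _
            · exact fun x hx => by simp_all
        · exact le_rfl
    _ = ∑' a, ENNReal.ofReal (Real.negMulLog (μ (f ⁻¹' {a})).toReal) := by
        rw [ENNReal.tsum_comm]
        refine tsum_congr fun a => ?_
        rw [tsum_eq_single (g a)]
        · simp
        · intro b hb
          simp [hb.symm]

lemma shannon_prodMk_le (μ : Measure Ω) [IsProbabilityMeasure μ] [Countable A] [Countable B]
    [MeasurableSpace A] [MeasurableSpace B] [DiscreteMeasurableSpace A]
    [DiscreteMeasurableSpace B] {f : Ω → A} {g : Ω → B} (hf : Measurable f)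
    (hg : Measurable g) :
    shannon μ (fun x => (f x, g x)) ≤ shannon μ f + shannon μ g := by
  set p : A → ℝ≥0∞ := fun a => μ (f ⁻¹' {a})
  set q : B → ℝ≥0∞ := fun b => μ (g ⁻¹' {b})
  set r : A → B → ℝ≥0∞ := fun a b => μ (f ⁻¹' {a} ∩ g ⁻¹' {b})
  have mf (a : A) : MeasurableSet (f ⁻¹' {a}) := hf (MeasurableSet.of_discrete)
  have mg (b : B) : MeasurableSet (g ⁻¹' {b}) := hg (MeasurableSet.of_discrete)
  have hrp (a : A) : ∑' b, r a b = p a := by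
    refine Eq.trans ?_ (tsum_measure_fiber_inter μ hg (mf a))
    exact tsum_congr fun b => by rw [inter_comm]
  have hrq (b : B) : ∑' a, r a b = q b := tsum_measure_fiber_inter μ hf (mg b)
  have hp1 : ∑' a, p a = 1 := by
    simpa using tsum_measure_fiber_inter μ hf MeasurableSet.univ
  have hq1 : ∑' b, q b = 1 := by
    simpa using tsum_measure_fiber_inter μ hg MeasurableSet.univ
  have key (a : A) (b : B) : ENNReal.ofReal (Real.negMulLog (r a b).toReal) + r a b ≤
      r a b * ENNReal.ofReal (-Real.log (p a).toReal) +
      r a b * ENNReal.ofReal (-Real.log (q b).toReal) + p a * q b := by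
    have hr : r a b ≠ ∞ := measure_ne_top _ _
    have hpt : p a ≠ ∞ := measure_ne_top _ _
    have hqt : q b ≠ ∞ := measure_ne_top _ _
    rcases eq_or_ne (r a b) 0 with h0 | h0
    · simp [h0]
    have hrpos : 0 < (r a b).toReal := ENNReal.toReal_pos h0 hr
    have hp0 : p a ≠ 0 := fun h => h0 (measure_mono_null inter_subset_left h)
    have hq0 : q b ≠ 0 := fun h => h0 (measure_mono_null inter_subset_right h)
    have hppos : 0 < (p a).toReal := ENNReal.toReal_pos hp0 hpt
    have hqpos : 0 < (q b).toReal := ENNReal.toReal_pos hq0 hqt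
    have hple : (p a).toReal ≤ 1 := ENNReal.toReal_le_of_le_ofReal zero_le_one (by simpa using prob_le_one)
    have hqle : (q b).toReal ≤ 1 := ENNReal.toReal_le_of_le_ofReal zero_le_one (by simpa using prob_le_one)
    have hrle : (r a b).toReal ≤ 1 := ENNReal.toReal_le_of_le_ofReal zero_le_one (by simpa using prob_le_one)
    have hlp := Real.log_nonpos hppos.le hple
    have hlq := Real.log_nonpos hqpos.le hqle
    have hlr := Real.log_nonpos hrpos.le hrle
    have e1 : r a b = ENNReal.ofReal (r a b).toReal := (ENNReal.ofReal_toReal hr).symm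
    have e2 : p a * q b = ENNReal.ofReal ((p a).toReal * (q b).toReal) := by
      rw [ENNReal.ofReal_mul hppos.le, ENNReal.ofReal_toReal hpt, ENNReal.ofReal_toReal hqt]
    have hn : 0 ≤ Real.negMulLog (r a b).toReal := Real.negMulLog_nonneg hrpos.le hrle
    rw [e2]
    nth_rewrite 2 3 4 [e1]
    rw [← ENNReal.ofReal_mul hrpos.le, ← ENNReal.ofReal_mul hrpos.le,
      ← ENNReal.ofReal_add hn hrpos.le, ← ENNReal.ofReal_add, ← ENNReal.ofReal_add]
    · refine ENNReal.ofReal_le_ofReal ?_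
      have hlog := Real.log_le_sub_one_of_pos
        (x := (p a).toReal * (q b).toReal / (r a b).toReal) (by positivity)
      rw [Real.log_div (by positivity) (by positivity), Real.log_mul hppos.ne' hqpos.ne'] at hlog
      have := mul_le_mul_of_nonneg_left hlog hrpos.le
      rw [mul_sub (r a b).toReal (_ / _), mul_div_cancel₀ _ hrpos.ne'] at this
      rw [Real.negMulLog]
      nlinarith
    · nlinarith
    · nlinarith
    · nlinarith
    · nlinarith
  have hsum : ∑' a, ∑' b, (ENNReal.ofReal (Real.negMulLog (r a b).toReal) + r a b) ≤
      ∑' a, ∑' b, (r a b * ENNReal.ofReal (-Real.log (p a).toReal) +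
      r a b * ENNReal.ofReal (-Real.log (q b).toReal) + p a * q b) :=
    ENNReal.tsum_le_tsum fun a => ENNReal.tsum_le_tsum fun b => key a b
  simp only [ENNReal.tsum_add] at hsum
  have t1 : ∑' a, ∑' b, r a b = 1 := by simp only [hrp, hp1]
  have t2 : ∑' a, ∑' b, p a * q b = 1 := by
    simp only [ENNReal.tsum_mul_left, hq1, mul_one, hp1]
  have t3 : ∑' a, ∑' b, r a b * ENNReal.ofReal (-Real.log (p a).toReal) = shannon μ f := by
    simp only [ENNReal.tsum_mul_right, hrp]
    exact tsum_congr fun a => (ofReal_negMulLog_toReal _ (measure_ne_top _ _)).symm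
  have t4 : ∑' a, ∑' b, r a b * ENNReal.ofReal (-Real.log (q b).toReal) = shannon μ g := by
    rw [ENNReal.tsum_comm]
    simp only [ENNReal.tsum_mul_right, hrq]
    exact tsum_congr fun a => (ofReal_negMulLog_toReal _ (measure_ne_top _ _)).symm
  rw [t1, t2, t3, t4] at hsum
  have t5 : shannon μ (fun x => (f x, g x)) =
      ∑' a, ∑' b, ENNReal.ofReal (Real.negMulLog (r a b).toReal) := by
    unfold shannon
    rw [ENNReal.tsum_prod']
    refine tsum_congr fun a => tsum_congr fun b => ?_
    congr 4
    ext x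
    simp
  rw [t5]
  exact (ENNReal.add_le_add_iff_right ENNReal.one_ne_top).1 hsum

lemma shannon_comp_measurePreserving {μ : Measure Ω} {T : Ω → Ω} (hT : MeasurePreserving T μ μ)
    [MeasurableSpace A] [DiscreteMeasurableSpace A] {f : Ω → A} (hf : Measurable f) :
    shannon μ (f ∘ T) = shannon μ f := by
  unfold shannon
  refine tsum_congr fun a => ?_
  rw [preimage_comp, hT.measure_preimage (hf MeasurableSet.of_discrete).nullMeasurableSet]

lemma shannon_ne_top (μ : Measure Ω) [Finite A] (f : Ω → A) : shannon μ f ≠ ∞ := by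
  have := Fintype.ofFinite A
  unfold shannon
  rw [tsum_fintype]
  exact ENNReal.sum_ne_top.2 fun a _ => ENNReal.ofReal_ne_top

/-- The itinerary of length `n` of a point with respect to `P`. -/
def itinerary {Ω : Type*} (T : Ω → Ω) (P : Ω → A) (n : ℕ) (x : Ω) : List A :=
  (List.range n).map fun j => P (T^[j] x)

lemma itinerary_succ {Ω : Type*} (T : Ω → Ω) (P : Ω → A) (n : ℕ) (x : Ω) :
    itinerary T P (n + 1) x = itinerary T P n x ++ [P (T^[n] x)] := by
  simp [itinerary, List.range_succ]

lemma partInfo_eq (T : Ω → Ω) (μ : Measure Ω) (P : Ω → ℕ) (n : ℕ) :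
    partInfo T μ P n = shannon μ (itinerary T P n) := rfl

instance : MeasurableSpace (List ℕ) := ⊤

lemma measurable_itinerary {T : Ω → Ω} (hT : Measurable T) {P : Ω → ℕ} (hP : Measurable P)
    (n : ℕ) : Measurable (itinerary T P n) := by
  induction n with
  | zero => exact measurable_const
  | succ n ih =>
    have : itinerary T P (n + 1) =
        (fun p : List ℕ × ℕ => p.1 ++ [p.2]) ∘ fun x => (itinerary T P n x, P (T^[n] x)) :=
      funext fun x => itinerary_succ T P n x
    rw [this]
    exact (measurable_of_countable _).comp (ih.prodMk (hP.comp (hT.iterate n)))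

lemma shannon_itinerary_le (μ : Measure Ω) [IsProbabilityMeasure μ] {T : Ω → Ω}
    (hT : MeasurePreserving T μ μ) {P : Ω → ℕ} (hP : Measurable P) (n : ℕ) :
    shannon μ (itinerary T P n) ≤ n * shannon μ P := by
  induction n with
  | zero =>
    have : itinerary T P 0 = (fun _ : Unit => ([] : List ℕ)) ∘ fun _ => () := rfl
    rw [this]
    refine (shannon_comp_le μ measurable_const _).trans ?_
    simp [shannon]
  | succ n ih =>
    have : itinerary T P (n + 1) =
        (fun p : List ℕ × ℕ => p.1 ++ [p.2]) ∘ fun x => (itinerary T P n x, P (T^[n] x)) :=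
      funext fun x => itinerary_succ T P n x
    have hTn : Measurable fun x => P (T^[n] x) := hP.comp (hT.measurable.iterate n)
    rw [this]
    refine (shannon_comp_le μ ((measurable_itinerary hT.measurable hP n).prodMk hTn) _).trans ?_
    refine (shannon_prodMk_le μ (measurable_itinerary hT.measurable hP n) hTn).trans ?_
    have h2 : shannon μ (fun x => P (T^[n] x)) = shannon μ P :=
      shannon_comp_measurePreserving (hT.iterate n) hP
    rw [h2]
    push_cast
    rw [add_mul, one_mul]
    gcongr

end Shannon

section Prefix

/-- The first `n` letters of a sequence. -/
def pre (n : ℕ) (x : ℕ → Bool) : Fin n → Bool := fun i => x i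

lemma pre_eq_pre_iff {n : ℕ} {x y : ℕ → Bool} : pre n x = pre n y ↔ ∀ i < n, x i = y i :=
  ⟨fun h i hi => congrFun h ⟨i, hi⟩, fun h => funext fun i => h i i.2⟩

lemma measurable_pre (n : ℕ) : Measurable (pre n) :=
  measurable_pi_lambda _ fun _ => measurable_pi_apply _

lemma continuous_pre (n : ℕ) : Continuous (pre n) :=
  continuous_pi fun _ => continuous_apply _

lemma shift_iterate_apply (j : ℕ) (x : ℕ → Bool) (i : ℕ) : shift^[j] x i = x (i + j) := by
  induction j generalizing x with
  | zero => rfl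
  | succ j ih =>
    rw [Function.iterate_succ_apply, ih]
    simp [shift, add_assoc]

lemma measurable_shift : Measurable shift :=
  measurable_pi_lambda _ fun _ => measurable_pi_apply _

lemma continuous_shift : Continuous shift :=
  continuous_pi fun _ => continuous_apply _

/-- Extend a finite word to a sequence. -/
def padWord {n : ℕ} (u : Fin n → Bool) : ℕ → Bool := fun i => if h : i < n then u ⟨i, h⟩ else false

lemma pre_padWord {n : ℕ} (u : Fin n → Bool) : pre n (padWord u) = u := by
  funext i
  simp [pre, padWord]

lemma exists_pre_preimage_of_mem_measurableCylinders {s : Set (ℕ → Bool)}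
    (hs : s ∈ measurableCylinders fun _ : ℕ => Bool) :
    ∃ k, ∀ x y : ℕ → Bool, pre k x = pre k y → (x ∈ s ↔ y ∈ s) := by
  obtain ⟨J, S, -, rfl⟩ := (mem_measurableCylinders s).1 hs
  refine ⟨J.sup id + 1, fun x y h => ?_⟩
  rw [mem_cylinder, mem_cylinder]
  have : J.restrict x = J.restrict y := by
    funext i
    exact pre_eq_pre_iff.1 h i (Nat.lt_succ_of_le (Finset.le_sup (f := id) i.2))
  rw [this]

lemma exists_approx_pre (μ : Measure (ℕ → Bool)) [IsProbabilityMeasure μ]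
    {P : (ℕ → Bool) → ℕ} (hP : Measurable P) (hfin : (range P).Finite) {δ : ℝ≥0∞}
    (hδ : 0 < δ) :
    ∃ (k : ℕ) (q : (Fin k → Bool) → ℕ), μ {x | P x ≠ q (pre k x)} ≤ δ := by
  classical
  set V := hfin.toFinset
  have hPV (x : ℕ → Bool) : P x ∈ V := hfin.mem_toFinset.2 ⟨x, rfl⟩
  obtain ⟨δ', hδ', hsum⟩ := ENNReal.exists_pos_sum_of_countable hδ.ne' ℕ
  have happ (v : ℕ) : ∃ t ∈ measurableCylinders fun _ : ℕ => Bool,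
      μ (symmDiff t (P ⁻¹' {v})) < δ' v := by
    refine exists_measure_symmDiff_lt_of_generateFrom_isSetRing
      isSetAlgebra_measurableCylinders.isSetRing ⟨{univ}, countable_singleton _, ?_, by simp⟩
      generateFrom_measurableCylinders.symm (hP MeasurableSet.of_discrete)
      (by simpa using hδ' v)
    simpa only [singleton_subset_iff] using isSetAlgebra_measurableCylinders.univ_mem
  choose t ht hμ using happ
  choose k hk using fun v => exists_pre_preimage_of_mem_measurableCylinders (ht v)
  set K := V.sup k
  set Q : (ℕ → Bool) → ℕ := fun x => ∑ v ∈ V, if x ∈ t v then v else 0 with hQ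
  have hQK (x y : ℕ → Bool) (h : pre K x = pre K y) : Q x = Q y := by
    refine Finset.sum_congr rfl fun v hv => ?_
    have : x ∈ t v ↔ y ∈ t v := hk v x y <| pre_eq_pre_iff.2 fun i hi =>
      pre_eq_pre_iff.1 h i (hi.trans_le (Finset.le_sup hv))
    simp [this]
  refine ⟨K, fun u => Q (padWord u), ?_⟩
  calc μ {x | P x ≠ Q (padWord (pre K x))} ≤ μ (⋃ v : ℕ, symmDiff (t v) (P ⁻¹' {v})) := by
        refine measure_mono fun x hx => ?_
        by_contra hcon
        refine hx ?_
        rw [hQK _ x (pre_padWord _)]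
        have hmem (v : ℕ) : x ∈ t v ↔ P x = v := by
          have : x ∉ symmDiff (t v) (P ⁻¹' {v}) := fun h => hcon (mem_iUnion.2 ⟨v, h⟩)
          rw [Set.mem_symmDiff] at this
          simp only [mem_preimage, mem_singleton_iff] at this
          tauto
        simp only [hQ, hmem]
        rw [Finset.sum_ite_eq]
        simp [hPV]
    _ ≤ ∑' v, μ (symmDiff (t v) (P ⁻¹' {v})) := measure_iUnion_le _
    _ ≤ ∑' v, (δ' v : ℝ≥0∞) := ENNReal.tsum_le_tsum fun v => (hμ v).le
    _ ≤ δ := hsum.le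

end Prefix

section Entropy

/-- Entropy of the partition of `{0,1}^ℕ` into cylinders of length `n`. -/
noncomputable def cylEntropy (μ : Measure (ℕ → Bool)) (n : ℕ) : ℝ≥0∞ := shannon μ (pre n)

lemma cylEntropy_add_le (μ : Measure (ℕ → Bool)) [IsProbabilityMeasure μ]
    (hμ : MeasurePreserving shift μ μ) (m n : ℕ) :
    cylEntropy μ (m + n) ≤ cylEntropy μ m + cylEntropy μ n := by
  have : pre (m + n) = (fun p : (Fin m → Bool) × (Fin n → Bool) => Fin.append p.1 p.2) ∘
      fun x => (pre m x, (pre n ∘ shift^[m]) x) := by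
    funext x i
    refine Fin.addCases (fun i => ?_) (fun i => ?_) i
    · simp [pre]
    · simp [pre, shift_iterate_apply, add_comm]
  have hm := (measurable_pre n).comp (measurable_shift.iterate m)
  calc cylEntropy μ (m + n) ≤ _ := by
        unfold cylEntropy
        rw [this]
        exact shannon_comp_le μ ((measurable_pre m).prodMk hm) _
    _ ≤ _ := shannon_prodMk_le μ (measurable_pre m) hm
    _ = _ := by
      rw [shannon_comp_measurePreserving (hμ.iterate m) (measurable_pre n)]
      rfl

lemma cylEntropy_mul_add_le (μ : Measure (ℕ → Bool)) [IsProbabilityMeasure μ]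
    (hμ : MeasurePreserving shift μ μ) (m t k : ℕ) :
    cylEntropy μ (m * t + k) ≤ t * cylEntropy μ m + cylEntropy μ k := by
  induction t with
  | zero => simp
  | succ t ih =>
    rw [show m * (t + 1) + k = m + (m * t + k) by ring]
    refine (cylEntropy_add_le μ hμ _ _).trans ?_
    push_cast
    rw [add_mul, one_mul, add_comm ((t : ℝ≥0∞) * _), add_assoc]
    exact add_le_add le_rfl ih

/-- The entropy rate along cylinders. -/
noncomputable def cylRate (μ : Measure (ℕ → Bool)) : ℝ≥0∞ :=
  ⨅ n : ℕ, cylEntropy μ (n + 1) / ((n + 1 : ℕ) : ℝ≥0∞)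

lemma cylRate_mul_le (μ : Measure (ℕ → Bool)) (n : ℕ) : cylRate μ * n ≤ cylEntropy μ n := by
  rcases n with - | n
  · simp
  · rw [← ENNReal.le_div_iff_mul_le (by simp) (by simp)]
    exact iInf_le _ n

lemma cylRate_le_ksEntropy (μ : Measure (ℕ → Bool)) [IsProbabilityMeasure μ] :
    cylRate μ ≤ ksEntropy shift μ := by
  have hP : Measurable fun x : ℕ → Bool => (x 0).toNat :=
    (measurable_of_countable Bool.toNat).comp (measurable_pi_apply 0)
  have hfin : (range fun x : ℕ → Bool => (x 0).toNat).Finite := by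
    refine (Set.finite_Iio 2).subset ?_
    rintro _ ⟨x, rfl⟩
    exact Bool.toNat_lt _
  unfold ksEntropy
  refine le_iSup_of_le _ (le_iSup_of_le hP (le_iSup_of_le hfin ?_))
  refine le_liminf_of_le (by isBoundedDefault) ?_
  filter_upwards [eventually_gt_atTop 0] with n hn
  rw [ENNReal.le_div_iff_mul_le (by simp [hn.ne']) (by simp)]
  refine (cylRate_mul_le μ n).trans ?_
  rw [partInfo_eq]
  have : pre n = (fun l : List ℕ => fun i : Fin n => l.getD i 0 == 1) ∘
      itinerary shift (fun x : ℕ → Bool => (x 0).toNat) n := by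
    funext x i
    simp [pre, itinerary, shift_iterate_apply]
  unfold cylEntropy
  rw [this]
  exact shannon_comp_le μ (measurable_itinerary measurable_shift hP n) _

lemma exists_shannon_le_of_measure_ne_zero_le (μ : Measure (ℕ → Bool)) [IsProbabilityMeasure μ] (N : ℕ) {ε : ℝ≥0∞}
    (hε : 0 < ε) : ∃ δ : ℝ≥0∞, 0 < δ ∧ ∀ R : (ℕ → Bool) → ℕ, Measurable R → (∀ x, R x < N) →
      μ {x | R x ≠ 0} ≤ δ → shannon μ R ≤ ε := by
  obtain ⟨η, hη, hsum⟩ := ENNReal.exists_pos_sum_of_countable hε.ne' ℕ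
  have hcont : Tendsto (fun p : ℝ≥0∞ => ENNReal.ofReal (Real.negMulLog p.toReal)) (𝓝 0) (𝓝 0) := by
    have h1 : Tendsto ENNReal.toReal (𝓝 0) (𝓝 0) := by
      simpa using ENNReal.tendsto_toReal ENNReal.zero_ne_top
    have h2 := (Real.continuous_negMulLog.tendsto 0).comp h1
    have h3 := (ENNReal.continuous_ofReal.tendsto _).comp h2
    simpa [Function.comp_def] using h3
  have hcont1 : Tendsto (fun p : ℝ≥0∞ => ENNReal.ofReal (Real.negMulLog (1 - p.toReal)))
      (𝓝 0) (𝓝 0) := by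
    have h1 : Tendsto ENNReal.toReal (𝓝 0) (𝓝 0) := by
      simpa using ENNReal.tendsto_toReal ENNReal.zero_ne_top
    have h2 := (Real.continuous_negMulLog.tendsto (1 - 0)).comp (h1.const_sub 1)
    have h3 := (ENNReal.continuous_ofReal.tendsto _).comp h2
    simpa [Function.comp_def] using h3
  have hev : ∀ᶠ p : ℝ≥0∞ in 𝓝 0, ENNReal.ofReal (Real.negMulLog (1 - p.toReal)) < η 0 ∧
      ∀ v ∈ Finset.range N, ENNReal.ofReal (Real.negMulLog p.toReal) < η v := by
    refine (hcont1.eventually_lt_const (by simpa using hη 0)).and ?_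
    rw [Filter.eventually_all_finset]
    exact fun v _ => hcont.eventually_lt_const (by simpa using hη v)
  obtain ⟨δ, hδ, hδ'⟩ := ENNReal.nhds_zero_basis_Iic.eventually_iff.1 hev
  refine ⟨δ, hδ, fun R hR hN hle => ?_⟩
  refine le_trans (ENNReal.tsum_le_tsum fun v => ?_) hsum.le
  rcases eq_or_ne v 0 with rfl | hv
  · have : (μ (R ⁻¹' {0})).toReal = 1 - (μ {x | R x ≠ 0}).toReal := by
      have := prob_compl_eq_one_sub (μ := μ) (hR (MeasurableSet.of_discrete (s := {0}))).compl
      rw [compl_compl] at this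
      rw [this, ENNReal.toReal_sub_of_le prob_le_one ENNReal.one_ne_top]
      rfl
    rw [this]
    exact (hδ' hle).1.le
  · by_cases hvN : v < N
    · refine ((hδ' (x := μ (R ⁻¹' {v})) ?_).2 v (by simpa using hvN)).le
      refine (measure_mono fun x hx => ?_).trans hle
      simp only [mem_preimage, mem_singleton_iff] at hx
      simp [hx, hv]
    · have : R ⁻¹' {v} = ∅ := by
        ext x
        simpa using fun h : R x = v => hvN (h ▸ hN x)
      simp [this]

lemma partInfo_le (μ : Measure (ℕ → Bool)) [IsProbabilityMeasure μ]
    (hμ : MeasurePreserving shift μ μ) {P : (ℕ → Bool) → ℕ} (hP : Measurable P)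
    (hfin : (range P).Finite) {ε : ℝ≥0∞} (hε : 0 < ε) :
    ∃ k, ∀ n, partInfo shift μ P n ≤ cylEntropy μ (n + k) + n * ε := by
  obtain ⟨N, hN⟩ := hfin.bddAbove
  obtain ⟨δ, hδ, h⟩ := exists_shannon_le_of_measure_ne_zero_le μ (N + 2) hε
  obtain ⟨k, q, hq⟩ := exists_approx_pre μ hP hfin hδ
  set R : (ℕ → Bool) → ℕ := fun x => if P x = q (pre k x) then 0 else P x + 1 with hR
  have hqm : Measurable fun x => q (pre k x) := (measurable_of_countable _).comp (measurable_pre k)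
  have hRm : Measurable R :=
    Measurable.ite (measurableSet_eq_fun hP hqm) measurable_const
      ((measurable_of_countable fun n : ℕ => n + 1).comp hP)
  have hRε : shannon μ R ≤ ε := by
    refine h R hRm (fun x => ?_) (le_trans (measure_mono fun x hx => ?_) hq)
    · have : P x ≤ N := hN ⟨x, rfl⟩
      simp only [hR]
      split_ifs <;> omega
    · by_contra hx'
      simp only [ne_eq, mem_ofPred_eq, not_not] at hx'
      simp [hR, hx'] at hx
  refine ⟨k, fun n => ?_⟩
  rw [partInfo_eq]
  set g : (Fin (n + k) → Bool) × List ℕ → List ℕ := fun p =>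
    (List.range n).map fun j => if p.2.getD j 0 = 0 then q (pre k (shift^[j] (padWord p.1)))
      else p.2.getD j 0 - 1
  have hfac : itinerary shift P n = g ∘ fun x => (pre (n + k) x, itinerary shift R n x) := by
    funext x
    simp only [itinerary, g, Function.comp]
    refine List.map_congr_left fun j hj => ?_
    rw [List.mem_range] at hj
    have h1 : ((List.range n).map fun j => R (shift^[j] x)).getD j 0 = R (shift^[j] x) := by
      simp [hj]
    have h2 : pre k (shift^[j] (padWord (pre (n + k) x))) = pre k (shift^[j] x) := by
      rw [pre_eq_pre_iff]
      intro i hi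
      rw [shift_iterate_apply, shift_iterate_apply]
      exact pre_eq_pre_iff.1 (pre_padWord (pre (n + k) x)) _ (by omega)
    rw [h1, h2]
    simp only [hR]
    by_cases hc : P (shift^[j] x) = q (pre k (shift^[j] x))
    · simp [hc]
    · simp [hc]
  rw [hfac]
  have hm2 := measurable_itinerary measurable_shift hRm n
  refine (shannon_comp_le μ ((measurable_pre (n + k)).prodMk hm2) g).trans ?_
  refine (shannon_prodMk_le μ (measurable_pre (n + k)) hm2).trans ?_
  refine add_le_add le_rfl ((shannon_itinerary_le μ hμ hRm n).trans ?_)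
  gcongr

lemma ksEntropy_le_cylRate (μ : Measure (ℕ → Bool)) [IsProbabilityMeasure μ]
    (hμ : MeasurePreserving shift μ μ) : ksEntropy shift μ ≤ cylRate μ := by
  refine iSup_le fun P => iSup_le fun hP => iSup_le fun hfin => le_iInf fun m => ?_
  refine ENNReal.le_of_forall_pos_le_add fun ε hε _ => ?_
  have hε2 : (0 : ℝ≥0∞) < ε / 2 := ENNReal.half_pos (by simpa using hε.ne')
  obtain ⟨k, hk⟩ := partInfo_le μ hμ hP hfin hε2
  refine liminf_le_of_frequently_le' ?_
  obtain ⟨t₀, ht₀⟩ := ENNReal.exists_nat_mul_gt hε2.ne' (shannon_ne_top μ (pre k))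
  rw [frequently_atTop]
  intro a
  refine ⟨(m + 1) * (t₀ + a + 1), by nlinarith, ?_⟩
  set t := t₀ + a + 1
  have ht : (t : ℝ≥0∞) ≠ 0 := by simp [t]
  have hm0 : ((m + 1 : ℕ) : ℝ≥0∞) ≠ 0 := by simp
  have hn0 : (((m + 1) * t : ℕ) : ℝ≥0∞) ≠ 0 := by simp [t]
  rw [ENNReal.div_le_iff hn0 (ENNReal.natCast_ne_top _)]
  calc partInfo shift μ P ((m + 1) * t) ≤ _ := hk _
    _ ≤ t * cylEntropy μ (m + 1) + cylEntropy μ k + ((m + 1) * t : ℕ) * (ε / 2) := by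
      gcongr
      exact cylEntropy_mul_add_le μ hμ _ _ _
    _ ≤ t * cylEntropy μ (m + 1) + ((m + 1) * t : ℕ) * (ε / 2) +
        ((m + 1) * t : ℕ) * (ε / 2) := by
      gcongr
      refine ht₀.le.trans ?_
      gcongr
      simp only [t]
      nlinarith
    _ = _ := by
      rw [add_assoc, ← mul_add, ENNReal.add_halves, add_mul (_ / _), mul_comm (ε : ℝ≥0∞)]
      congr 1
      rw [Nat.cast_mul, ← mul_assoc, ENNReal.div_mul_cancel hm0 (ENNReal.natCast_ne_top _), mul_comm]

lemma ksEntropy_eq_cylRate (μ : Measure (ℕ → Bool)) [IsProbabilityMeasure μ]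
    (hμ : MeasurePreserving shift μ μ) : ksEntropy shift μ = cylRate μ :=
  (ksEntropy_le_cylRate μ hμ).antisymm (cylRate_le_ksEntropy μ)

end Entropy

section Invariant

lemma isClopen_preimage_pre (n : ℕ) (B : Set (Fin n → Bool)) : IsClopen (pre n ⁻¹' B) :=
  (isClopen_discrete B).preimage (continuous_pre n)

lemma cyl_eq_preimage_pre (w : List Bool) : cyl w = pre w.length ⁻¹' {w.get} := by
  ext x
  simp [cyl, pre, funext_iff]

lemma isClopen_cyl (w : List Bool) : IsClopen (cyl w) := by
  rw [cyl_eq_preimage_pre]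
  exact isClopen_preimage_pre _ _

lemma continuous_real_of_isClopen {s : Set (ℕ → Bool)} (hs : IsClopen s) :
    Continuous fun μ : ProbabilityMeasure (ℕ → Bool) => (μ : Measure (ℕ → Bool)).real s := by
  rw [continuous_iff_continuousAt]
  intro μ
  have h := ProbabilityMeasure.tendsto_measure_of_null_frontier_of_tendsto'
    (tendsto_id (α := ProbabilityMeasure (ℕ → Bool)) (x := 𝓝 μ)) (E := s)
    (by simp [hs.frontier_eq])
  exact (ENNReal.tendsto_toReal (measure_ne_top _ _)).comp h

lemma continuous_cylEntropy (n : ℕ) :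
    Continuous fun μ : ProbabilityMeasure (ℕ → Bool) => cylEntropy μ n := by
  simp only [cylEntropy, shannon, tsum_fintype]
  refine continuous_finsetSum _ fun u _ => ENNReal.continuous_ofReal.comp
    (Real.continuous_negMulLog.comp ?_)
  exact continuous_real_of_isClopen (isClopen_preimage_pre n {u})

lemma upperSemicontinuous_cylRate :
    UpperSemicontinuous fun μ : ProbabilityMeasure (ℕ → Bool) => cylRate μ :=
  upperSemicontinuous_iInf fun n => Continuous.upperSemicontinuous <|
    ENNReal.continuous_div_const _ (by simp) |>.comp (continuous_cylEntropy (n + 1))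

/-- Invariant probability measures giving mass `a i` to each cylinder `[w i]`, `i ∈ I`. -/
def invariantWith (I : Set ℕ) (w : ℕ → List Bool) (a : ℕ → ℝ) :
    Set (ProbabilityMeasure (ℕ → Bool)) :=
  {μ | MeasurePreserving shift (μ : Measure (ℕ → Bool)) μ ∧
    ∀ i ∈ I, (μ : Measure (ℕ → Bool)).real (cyl (w i)) = a i}

lemma isCompact_invariantWith (I : Set ℕ) (w : ℕ → List Bool) (a : ℕ → ℝ) :
    IsCompact (invariantWith I w a) := by
  refine IsClosed.isCompact ?_
  have h1 : IsClosed {μ : ProbabilityMeasure (ℕ → Bool) |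
      μ.map continuous_shift.measurable.aemeasurable = μ} :=
    isClosed_eq (ProbabilityMeasure.continuous_map continuous_shift) continuous_id
  have h2 : IsClosed {μ : ProbabilityMeasure (ℕ → Bool) |
      ∀ i ∈ I, (μ : Measure (ℕ → Bool)).real (cyl (w i)) = a i} := by
    simp only [Set.ofPred_forall]
    exact isClosed_iInter fun i => isClosed_iInter fun _ =>
      isClosed_eq (continuous_real_of_isClopen (isClopen_cyl _)) continuous_const
  convert h1.inter h2 using 1
  ext μ
  refine and_congr_left fun _ => ⟨fun h => Subtype.ext h.map_eq, fun h => ⟨measurable_shift, ?_⟩⟩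
  exact congrArg Subtype.val h

lemma exists_forall_cylRate_le {I : Set ℕ} {w : ℕ → List Bool} {a : ℕ → ℝ}
    (hne : (invariantWith I w a).Nonempty) :
    ∃ μ ∈ invariantWith I w a, ∀ ν ∈ invariantWith I w a,
      cylRate (ν : Measure (ℕ → Bool)) ≤ cylRate (μ : Measure (ℕ → Bool)) :=
  (upperSemicontinuous_cylRate.upperSemicontinuousOn _).exists_isMaxOn hne
    (isCompact_invariantWith I w a)

lemma isClopen_of_mem_measurableCylinders {s : Set (ℕ → Bool)}
    (hs : s ∈ measurableCylinders fun _ : ℕ => Bool) : IsClopen s := by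
  obtain ⟨k, hk⟩ := exists_pre_preimage_of_mem_measurableCylinders hs
  convert isClopen_preimage_pre k {u | padWord u ∈ s} using 1
  ext x
  exact hk _ _ (pre_padWord _).symm

lemma measurePreserving_shift_of_isClopen (μ : Measure (ℕ → Bool)) [IsProbabilityMeasure μ]
    (h : ∀ s, IsClopen s → μ.real (shift ⁻¹' s) = μ.real s) : MeasurePreserving shift μ μ := by
  refine ⟨measurable_shift, ?_⟩
  have := Measure.isProbabilityMeasure_map (μ := μ) measurable_shift.aemeasurable
  refine ext_of_generate_finite _ generateFrom_measurableCylinders.symm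
    isPiSystem_measurableCylinders (fun s hs => ?_) (by simp)
  have hc := isClopen_of_mem_measurableCylinders hs
  rw [Measure.map_apply measurable_shift hc.isOpen.measurableSet]
  exact (measureReal_eq_measureReal_iff).1 (h s hc)

end Invariant

section Empirical

/-- The number of visits to `s` of the orbit of `x` up to time `n`. -/
noncomputable def visits (s : Set (ℕ → Bool)) (x : ℕ → Bool) (n : ℕ) : ℝ :=
  ∑ j ∈ Finset.range n, s.indicator (fun _ => (1 : ℝ)) (shift^[j] x)

/-- The empirical measure of the first `n + 1` points of the orbit of `x`. -/
noncomputable def empMeasure (x : ℕ → Bool) (n : ℕ) : Measure (ℕ → Bool) :=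
  ((n + 1 : ℕ) : ℝ≥0∞)⁻¹ • ∑ j ∈ Finset.range (n + 1), Measure.dirac (shift^[j] x)

instance (x : ℕ → Bool) (n : ℕ) : IsProbabilityMeasure (empMeasure x n) := by
  refine ⟨?_⟩
  simp only [empMeasure, Measure.smul_apply, Measure.finsetSum_apply, measure_univ,
    Finset.sum_const, Finset.card_range, smul_eq_mul, nsmul_eq_mul, mul_one]
  exact ENNReal.inv_mul_cancel (by simp) (ENNReal.natCast_ne_top _)

/-- The empirical measure as a bundled probability measure. -/
noncomputable def empProb (x : ℕ → Bool) (n : ℕ) : ProbabilityMeasure (ℕ → Bool) :=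
  ⟨empMeasure x n, inferInstance⟩

lemma empMeasure_real {s : Set (ℕ → Bool)} (hs : MeasurableSet s) (x : ℕ → Bool) (n : ℕ) :
    (empMeasure x n).real s = visits s x (n + 1) / ((n + 1 : ℕ) : ℝ) := by
  simp only [empMeasure, Measure.real, Measure.smul_apply, Measure.finsetSum_apply,
    Measure.dirac_apply' _ hs, smul_eq_mul, ENNReal.toReal_mul, ENNReal.toReal_inv,
    ENNReal.toReal_natCast]
  rw [ENNReal.toReal_sum, div_eq_inv_mul]
  · congr 1
    refine Finset.sum_congr rfl fun j _ => ?_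
    by_cases h : shift^[j] x ∈ s <;> simp [h]
  · intro j _
    by_cases h : shift^[j] x ∈ s <;> simp [h]

lemma hasFreq_iff {w : List Bool} {x : ℕ → Bool} {r : ℝ} :
    hasFreq w x r ↔ Tendsto (fun n => (empMeasure x n).real (cyl w)) atTop (𝓝 r) := by
  simp only [empMeasure_real (isClopen_cyl w).isOpen.measurableSet]
  exact (tendsto_add_atTop_iff_nat (f := fun n : ℕ => visits (cyl w) x n / (n : ℝ)) 1).symm

lemma tendsto_empMeasure_sub (x : ℕ → Bool) {s : Set (ℕ → Bool)} (hs : MeasurableSet s) :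
    Tendsto (fun n => (empMeasure x n).real (shift ⁻¹' s) - (empMeasure x n).real s) atTop
      (𝓝 0) := by
  have hlim : Tendsto (fun n : ℕ => 1 / ((n : ℝ) + 1)) atTop (𝓝 0) :=
    tendsto_one_div_add_atTop_nhds_zero_nat
  refine squeeze_zero_norm (fun n => ?_) hlim
  rw [empMeasure_real hs, empMeasure_real (measurable_shift hs), ← sub_div, norm_div]
  have hn : ‖((n + 1 : ℕ) : ℝ)‖ = (n : ℝ) + 1 := by
    rw [Real.norm_natCast]
    push_cast
    rfl
  rw [hn]
  gcongr
  have : visits (shift ⁻¹' s) x (n + 1) - visits s x (n + 1) =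
      s.indicator (fun _ => (1 : ℝ)) (shift^[n + 1] x) - s.indicator (fun _ => (1 : ℝ)) x := by
    have h (j : ℕ) : (shift ⁻¹' s).indicator (fun _ => (1 : ℝ)) (shift^[j] x) =
        s.indicator (fun _ => (1 : ℝ)) (shift^[j + 1] x) := by
      rw [Function.iterate_succ_apply']
      rfl
    simp only [visits, h]
    rw [← Finset.sum_sub_distrib, Finset.sum_range_sub
      (f := fun j => s.indicator (fun _ => (1 : ℝ)) (shift^[j] x))]
    rfl
  rw [this, Real.norm_eq_abs, abs_le]
  generalize shift^[n + 1] x = y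
  by_cases h1 : y ∈ s <;> by_cases h2 : x ∈ s <;> simp [h1, h2]

lemma exists_mapClusterPt_empMeasure {I : Set ℕ} {w : ℕ → List Bool} {a : ℕ → ℝ}
    {x : ℕ → Bool} (hx : ∀ i ∈ I, hasFreq (w i) x (a i)) :
    ∃ μ ∈ invariantWith I w a,
      MapClusterPt μ atTop fun n => empProb x n := by
  obtain ⟨μ, hμ⟩ := exists_clusterPt_of_compactSpace
    (map (fun n => empProb x n) atTop)
  have key {F : ProbabilityMeasure (ℕ → Bool) → ℝ} (hF : Continuous F) {r : ℝ}
      (hr : Tendsto (fun n => F (empProb x n)) atTop (𝓝 r)) : F μ = r := by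
    have h1 : MapClusterPt (F μ) atTop (fun n => F (empProb x n)) :=
      MapClusterPt.continuousAt_comp hF.continuousAt hμ
    exact eq_of_nhds_neBot (h1.neBot.mono (inf_le_inf_left _ hr))
  refine ⟨μ, ⟨measurePreserving_shift_of_isClopen _ fun s hs => ?_, fun i hi => ?_⟩, hμ⟩
  · rw [← sub_eq_zero]
    exact key ((continuous_real_of_isClopen (hs.preimage continuous_shift)).sub
      (continuous_real_of_isClopen hs)) (tendsto_empMeasure_sub x hs.isOpen.measurableSet)
  · exact key (continuous_real_of_isClopen (isClopen_cyl _)) (hasFreq_iff.1 (hx i hi))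

end Empirical

section Bowen

lemma mem_bowenBall_shift {x y : ℕ → Bool} {n k : ℕ} {ε : ℝ} (hk : (1 / 2 : ℝ) ^ k < ε)
    (h : ∀ j < n + k, y j = x j) : y ∈ bowenBall shift x n ε := by
  intro j hj
  refine lt_of_le_of_lt ?_ hk
  refine PiNat.mem_cylinder_iff_dist_le.1 ?_
  intro i hi
  rw [shift_iterate_apply, shift_iterate_apply]
  exact (h _ (by omega)).symm

lemma eq_of_mem_bowenBall_shift_one {x y : ℕ → Bool} {n : ℕ} (h : y ∈ bowenBall shift x n 1)
    {j : ℕ} (hj : j < n) : x j = y j := by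
  have h1 : dist (shift^[j] x) (shift^[j] y) < (1 / 2 : ℝ) ^ 0 := by
    simpa using h j hj
  have h2 := PiNat.apply_eq_of_dist_lt h1 le_rfl
  rwa [shift_iterate_apply, shift_iterate_apply, zero_add] at h2

lemma bowenH_shift_le_tsum {Z : Set (ℕ → Bool)} {s ε : ℝ} {k N : ℕ} (hk : (1 / 2 : ℝ) ^ k < ε)
    {ι : Type*} [Countable ι] (c : ι → ℕ → Bool) (m : ι → ℕ) (hm : ∀ i, N ≤ m i)
    (hZ : ∀ x ∈ Z, ∃ i, ∀ j < m i + k, x j = c i j) :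
    bowenH shift Z s ε N ≤ ∑' i, ENNReal.ofReal (Real.exp (-s * (m i : ℝ))) := by
  unfold bowenH
  refine iInf_le_of_le (range fun i => (c i, m i)) <| iInf_le_of_le (countable_range _) <|
    iInf_le_of_le ?_ <| iInf_le_of_le ?_ ?_
  · rintro _ ⟨i, rfl⟩
    exact hm i
  · intro x hx
    obtain ⟨i, hi⟩ := hZ x hx
    exact mem_iUnion₂.2 ⟨_, ⟨i, rfl⟩, mem_bowenBall_shift hk hi⟩
  · exact ENNReal.tsum_le_tsum_comp_of_surjective rangeFactorization_surjective
      (fun p : range fun i => (c i, m i) =>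
        ENNReal.ofReal (Real.exp (-s * ((p : (ℕ → Bool) × ℕ).2 : ℝ))))

end Bowen

section Counting

variable {k : ℕ}

lemma sum_eq_sum_snoc {n : ℕ} (g : (Fin (n + 1) → Bool) → ℝ) :
    ∑ u, g u = ∑ u : Fin n → Bool, ∑ b : Bool, g (Fin.snoc u b) := by
  rw [← (Fin.snocEquiv fun _ : Fin (n + 1) => Bool).sum_comp, Fintype.sum_prod_type,
    Finset.sum_comm]
  rfl

/-- Transition weights associated with a weight on words of length `k + 1`. -/
noncomputable def transition (p : (Fin (k + 1) → Bool) → ℝ) (v : Fin (k + 1) → Bool) : ℝ :=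
  p v / ∑ b : Bool, p (Fin.snoc (Fin.init v) b)

lemma transition_nonneg {p : (Fin (k + 1) → Bool) → ℝ} (hp : ∀ v, 0 ≤ p v)
    (v : Fin (k + 1) → Bool) : 0 ≤ transition p v :=
  div_nonneg (hp v) (Finset.sum_nonneg fun _ _ => hp _)

lemma sum_transition_snoc_le {p : (Fin (k + 1) → Bool) → ℝ} (v : Fin k → Bool) :
    ∑ b : Bool, transition p (Fin.snoc v b) ≤ 1 := by
  simp only [transition, Fin.init_snoc]
  rw [← Finset.sum_div]
  exact div_self_le_one _

/-- The weight of the first `k + n` letters of `x` under the transition weights of `p`. -/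
noncomputable def pathWeight (p : (Fin (k + 1) → Bool) → ℝ) (x : ℕ → Bool) (n : ℕ) : ℝ :=
  ∏ j ∈ Finset.range n, transition p (pre (k + 1) (shift^[j] x))

lemma pathWeight_nonneg {p : (Fin (k + 1) → Bool) → ℝ} (hp : ∀ v, 0 ≤ p v) (x : ℕ → Bool)
    (n : ℕ) : 0 ≤ pathWeight p x n :=
  Finset.prod_nonneg fun _ _ => transition_nonneg hp _

lemma pre_shift_congr {m j N : ℕ} {x y : ℕ → Bool} (h : pre N x = pre N y) (hN : m + j ≤ N) :
    pre m (shift^[j] x) = pre m (shift^[j] y) := by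
  rw [pre_eq_pre_iff] at h ⊢
  intro i hi
  rw [shift_iterate_apply, shift_iterate_apply]
  exact h _ (by omega)

lemma pathWeight_congr (p : (Fin (k + 1) → Bool) → ℝ) {x y : ℕ → Bool} {n : ℕ}
    (h : pre (k + n) x = pre (k + n) y) : pathWeight p x n = pathWeight p y n := by
  refine Finset.prod_congr rfl fun j hj => ?_
  rw [Finset.mem_range] at hj
  rw [pre_shift_congr h (by omega)]

lemma pre_padWord_snoc {n : ℕ} (u : Fin n → Bool) (b : Bool) :
    pre n (padWord (Fin.snoc (α := fun _ => Bool) u b)) = u := by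
  funext i
  have : (i : ℕ) < n + 1 := by omega
  simp [pre, padWord, this, Fin.snoc]

lemma padWord_snoc_apply {n : ℕ} (u : Fin n → Bool) (b : Bool) :
    padWord (Fin.snoc (α := fun _ => Bool) u b) n = b := by
  simp [padWord, Fin.snoc]

lemma sum_pathWeight_le {p : (Fin (k + 1) → Bool) → ℝ} (hp : ∀ v, 0 ≤ p v) (n : ℕ) :
    ∑ u : Fin (k + n) → Bool, pathWeight p (padWord u) n ≤ 2 ^ k := by
  induction n with
  | zero => simp [pathWeight]
  | succ n ih =>
    refine le_trans (le_of_eq ?_) (le_trans (Finset.sum_le_sum fun u _ =>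
      mul_le_of_le_one_right (pathWeight_nonneg hp (padWord u) n) (sum_transition_snoc_le (p := p)
        (pre k (shift^[n] (padWord u))))) ih)
    refine (sum_eq_sum_snoc (n := k + n) fun u => pathWeight p (padWord u) (n + 1)).trans ?_
    refine Finset.sum_congr rfl fun u _ => ?_
    rw [Finset.mul_sum]
    refine Finset.sum_congr rfl fun b _ => ?_
    unfold pathWeight
    rw [Finset.prod_range_succ]
    congr 1
    · exact pathWeight_congr p (by rw [pre_padWord_snoc, pre_padWord])
    · congr 1
      funext i
      refine Fin.lastCases ?_ (fun i => ?_) i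
      · simp only [Fin.snoc_last, pre, shift_iterate_apply, Fin.val_last]
        exact padWord_snoc_apply u b
      · simp only [Fin.snoc_castSucc, pre, shift_iterate_apply, Fin.val_castSucc]
        have h := (pre_padWord_snoc u b).trans (pre_padWord u).symm
        exact pre_eq_pre_iff.1 h _ (by omega)

lemma card_pathWeight_le {p : (Fin (k + 1) → Bool) → ℝ} (hp : ∀ v, 0 ≤ p v) (n : ℕ) (t : ℝ) :
    ((Finset.univ.filter fun u : Fin (k + n) → Bool =>
      Real.exp (-(n * t)) ≤ pathWeight p (padWord u) n).card : ℝ) ≤ 2 ^ k * Real.exp (n * t) := by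
  rw [← div_le_iff₀ (Real.exp_pos _), div_eq_mul_inv, ← Real.exp_neg, ← nsmul_eq_mul]
  refine (Finset.card_nsmul_le_sum _ (fun u => pathWeight p (padWord u) n) _ fun u hu =>
    (Finset.mem_filter.1 hu).2).trans ?_
  refine (Finset.sum_le_sum_of_subset_of_nonneg (Finset.filter_subset _ _) fun u _ _ =>
    pathWeight_nonneg hp _ _).trans (sum_pathWeight_le hp n)

/-- The empirical distribution of the words of length `k + 1` occurring in `x` at the first
`n + 1` positions. -/
noncomputable def blockType (k : ℕ) (x : ℕ → Bool) (n : ℕ) (v : Fin (k + 1) → Bool) : ℝ :=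
  (empMeasure x n).real (pre (k + 1) ⁻¹' {v})

lemma blockType_eq (x : ℕ → Bool) (n : ℕ) (v : Fin (k + 1) → Bool) :
    blockType k x n v = (((Finset.range (n + 1)).filter fun j =>
      pre (k + 1) (shift^[j] x) = v).card : ℝ) / ((n + 1 : ℕ) : ℝ) := by
  rw [blockType, empMeasure_real (isClopen_preimage_pre _ _).isOpen.measurableSet, visits]
  congr 1
  rw [Finset.card_filter]
  push_cast
  exact Finset.sum_congr rfl fun j _ => by
    simp only [indicator, mem_preimage, mem_singleton_iff]

lemma blockType_congr {x y : ℕ → Bool} {n : ℕ}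
    (h : pre (k + (n + 1)) x = pre (k + (n + 1)) y) : blockType k x n = blockType k y n := by
  funext v
  rw [blockType_eq, blockType_eq]
  congr 3
  refine Finset.filter_congr fun j hj => ?_
  rw [Finset.mem_range] at hj
  rw [pre_shift_congr h (by omega)]

/-- The words of length `k + (n + 1)` whose empirical conditional entropy is at most `t`. -/
noncomputable def lowWords (k n : ℕ) (t : ℝ) : Finset (Fin (k + (n + 1)) → Bool) :=
  Finset.univ.filter fun u => Real.exp (-((n + 1 : ℕ) * t)) ≤
    pathWeight (blockType k (padWord u) n) (padWord u) (n + 1)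

lemma card_lowWords_le (k n : ℕ) (t : ℝ) :
    ((lowWords k n t).card : ℝ) ≤
      (n + 2 : ℕ) ^ (2 ^ (k + 1)) * (2 ^ k * Real.exp ((n + 1 : ℕ) * t)) := by
  classical
  set p : ((Fin (k + 1) → Bool) → Fin (n + 2)) → (Fin (k + 1) → Bool) → ℝ :=
    fun c v => ((c v : ℕ) : ℝ) / ((n + 1 : ℕ) : ℝ) with hp
  have hsub : lowWords k n t ⊆ Finset.univ.biUnion fun c =>
      Finset.univ.filter fun u : Fin (k + (n + 1)) → Bool =>
        Real.exp (-((n + 1 : ℕ) * t)) ≤ pathWeight (p c) (padWord u) (n + 1) := by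
    intro u hu
    rw [Finset.mem_biUnion]
    refine ⟨fun v => ⟨((Finset.range (n + 1)).filter fun j =>
      pre (k + 1) (shift^[j] (padWord u)) = v).card, ?_⟩, Finset.mem_univ _, ?_⟩
    · exact Nat.lt_succ_of_le ((Finset.card_filter_le _ _).trans (by simp))
    · have h := (Finset.mem_filter.1 hu).2
      refine Finset.mem_filter.2 ⟨Finset.mem_univ _, h.trans (le_of_eq ?_)⟩
      congr 1
      funext v
      exact blockType_eq _ _ _
  calc ((lowWords k n t).card : ℝ) ≤ ((Finset.univ.biUnion fun c =>
      Finset.univ.filter fun u : Fin (k + (n + 1)) → Bool =>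
        Real.exp (-((n + 1 : ℕ) * t)) ≤ pathWeight (p c) (padWord u) (n + 1)).card : ℝ) := by
        exact_mod_cast Finset.card_le_card hsub
    _ ≤ ∑ c, ((Finset.univ.filter fun u : Fin (k + (n + 1)) → Bool =>
        Real.exp (-((n + 1 : ℕ) * t)) ≤ pathWeight (p c) (padWord u) (n + 1)).card : ℝ) := by
        exact_mod_cast Finset.card_biUnion_le
    _ ≤ ∑ c : (Fin (k + 1) → Bool) → Fin (n + 2), 2 ^ k * Real.exp ((n + 1 : ℕ) * t) :=
        Finset.sum_le_sum fun c _ => card_pathWeight_le (fun v => by positivity) _ _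
    _ = _ := by
        rw [Finset.sum_const, nsmul_eq_mul]
        simp

/-- The entropy of the cylinder partition as a real number. -/
noncomputable def cylEntropyReal (μ : Measure (ℕ → Bool)) (n : ℕ) : ℝ :=
  ∑ u : Fin n → Bool, Real.negMulLog (μ.real (pre n ⁻¹' {u}))

lemma cylEntropy_eq_ofReal (μ : Measure (ℕ → Bool)) [IsProbabilityMeasure μ] (n : ℕ) :
    cylEntropy μ n = ENNReal.ofReal (cylEntropyReal μ n) := by
  rw [cylEntropy, shannon, tsum_fintype, cylEntropyReal, ENNReal.ofReal_sum_of_nonneg]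
  · rfl
  · exact fun u _ => Real.negMulLog_nonneg measureReal_nonneg measureReal_le_one

lemma continuous_cylEntropyReal (n : ℕ) :
    Continuous fun μ : ProbabilityMeasure (ℕ → Bool) => cylEntropyReal μ n :=
  continuous_finsetSum _ fun u _ => Real.continuous_negMulLog.comp
    (continuous_real_of_isClopen (isClopen_preimage_pre n {u}))

lemma sum_snoc_measureReal (μ : Measure (ℕ → Bool)) [IsProbabilityMeasure μ]
    (v : Fin k → Bool) :
    ∑ b : Bool, μ.real (pre (k + 1) ⁻¹' {Fin.snoc v b}) = μ.real (pre k ⁻¹' {v}) := by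
  have hset : pre k ⁻¹' {v} = ⋃ b : Bool, pre (k + 1) ⁻¹' {Fin.snoc v b} := by
    ext x
    simp only [mem_preimage, mem_singleton_iff, mem_iUnion]
    have hx : pre (k + 1) x = Fin.snoc (pre k x) (x k) := by
      funext i
      refine Fin.lastCases ?_ (fun i => ?_) i <;> simp [pre]
    rw [hx]
    constructor
    · rintro rfl
      exact ⟨_, rfl⟩
    · rintro ⟨b, h⟩
      have := congrArg (Fin.init (α := fun _ => Bool)) h
      simpa using this
  rw [hset, measureReal_iUnion_fintype]
  · intro b b' hb
    rw [Function.onFun, Set.disjoint_left]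
    rintro x hx hx'
    simp only [mem_preimage, mem_singleton_iff] at hx hx'
    rw [hx] at hx'
    exact hb (Fin.snoc_right_injective (α := fun _ => Bool) v hx')
  · exact fun b => (isClopen_preimage_pre _ _).isOpen.measurableSet

lemma pathWeight_blockType (x : ℕ → Bool) (n : ℕ) :
    pathWeight (blockType k x n) x (n + 1) = Real.exp (-((n + 1 : ℕ) *
      (cylEntropyReal (empMeasure x n) (k + 1) - cylEntropyReal (empMeasure x n) k))) := by
  classical
  set p := blockType k x n with hp
  set p' : (Fin k → Bool) → ℝ := fun v => (empMeasure x n).real (pre k ⁻¹' {v}) with hp'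
  have hsum (v : Fin k → Bool) : ∑ b : Bool, p (Fin.snoc v b) = p' v :=
    sum_snoc_measureReal _ v
  have hp0 (v) : 0 ≤ p v := measureReal_nonneg
  have hpos (v) (hv : p v ≠ 0) : p' (Fin.init v) ≠ 0 := by
    rw [← hsum]
    have h1 : p v ≤ ∑ b : Bool, p (Fin.snoc (Fin.init v) b) := by
      refine le_trans (le_of_eq ?_) (Finset.single_le_sum
        (f := fun b : Bool => p (Fin.snoc (Fin.init v) b)) (fun b _ => hp0 _)
        (Finset.mem_univ (v (Fin.last k))))
      rw [Fin.snoc_init_self]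
    exact (lt_of_lt_of_le (lt_of_le_of_ne (hp0 v) hv.symm) h1).ne'
  have hocc (j : ℕ) (hj : j < n + 1) : p (pre (k + 1) (shift^[j] x)) ≠ 0 := by
    rw [hp, blockType_eq]
    have : j ∈ (Finset.range (n + 1)).filter fun i =>
        pre (k + 1) (shift^[i] x) = pre (k + 1) (shift^[j] x) := by simpa using hj
    have := Finset.card_pos.2 ⟨j, this⟩
    positivity
  have hq (v) (hv : p v ≠ 0) : 0 < transition p v := by
    unfold transition
    rw [hsum]
    exact div_pos (lt_of_le_of_ne (hp0 v) hv.symm)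
      (lt_of_le_of_ne measureReal_nonneg (hpos v hv).symm)
  have hW : 0 < pathWeight p x (n + 1) :=
    Finset.prod_pos fun j hj => hq _ (hocc j (Finset.mem_range.1 hj))
  rw [← Real.exp_log hW]
  congr 1
  have h1 : Real.log (pathWeight p x (n + 1)) =
      ∑ v, ((n + 1 : ℕ) : ℝ) * (p v * Real.log (transition p v)) := by
    rw [pathWeight, Real.log_prod fun j hj => (hq _ (hocc j (Finset.mem_range.1 hj))).ne',
      ← Finset.sum_fiberwise (Finset.range (n + 1)) fun j => pre (k + 1) (shift^[j] x)]
    refine Finset.sum_congr rfl fun v _ => ?_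
    rw [Finset.sum_congr rfl fun j hj => by rw [(Finset.mem_filter.1 hj).2], Finset.sum_const,
      nsmul_eq_mul, ← mul_assoc, hp, blockType_eq, mul_div_cancel₀]
    positivity
  have h2 (v) : p v * Real.log (transition p v) =
      p v * Real.log (p v) - p v * Real.log (p' (Fin.init v)) := by
    rcases eq_or_ne (p v) 0 with h0 | h0
    · simp [h0]
    · rw [transition, hsum, Real.log_div h0 (hpos v h0)]
      ring
  have h3 : ∑ v, p v * Real.log (p' (Fin.init v)) = ∑ v, p' v * Real.log (p' v) := by
    rw [sum_eq_sum_snoc]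
    refine Finset.sum_congr rfl fun v _ => ?_
    simp only [Fin.init_snoc]
    rw [← Finset.sum_mul, hsum]
  have h4 : cylEntropyReal (empMeasure x n) (k + 1) = -∑ v, p v * Real.log (p v) := by
    rw [← Finset.sum_neg_distrib]
    exact Finset.sum_congr rfl fun v _ => by rw [Real.negMulLog, neg_mul]; rfl
  have h5 : cylEntropyReal (empMeasure x n) k = -∑ v, p' v * Real.log (p' v) := by
    rw [← Finset.sum_neg_distrib]
    exact Finset.sum_congr rfl fun v _ => by rw [Real.negMulLog, neg_mul]
  rw [h1, ← Finset.mul_sum, Finset.sum_congr rfl fun v _ => h2 v, Finset.sum_sub_distrib, h3, h4,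
    h5]
  ring

end Counting

section UpperBound

lemma exists_cylEntropyReal_sub_lt (μ : Measure (ℕ → Bool)) [IsProbabilityMeasure μ] {t : ℝ}
    (h : cylRate μ < ENNReal.ofReal t) :
    ∃ k, cylEntropyReal μ (k + 1) - cylEntropyReal μ k < t := by
  obtain ⟨n, hn⟩ := iInf_lt_iff.1 h
  by_contra! hcon
  have ht : 0 < t := by
    by_contra! ht
    rw [ENNReal.ofReal_of_nonpos ht] at h
    exact not_lt_bot h
  have h0 : cylEntropyReal μ 0 = 0 := by
    have (u : Fin 0 → Bool) : pre 0 ⁻¹' {u} = (univ : Set (ℕ → Bool)) :=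
      eq_univ_of_forall fun x => Subsingleton.elim (pre 0 x) u
    rw [cylEntropyReal, Fintype.sum_unique, this]
    simp
  have h1 := Finset.sum_le_sum fun k (_ : k ∈ Finset.range (n + 1)) => hcon k
  rw [Finset.sum_range_sub, h0, sub_zero, Finset.sum_const, Finset.card_range, nsmul_eq_mul] at h1
  rw [ENNReal.div_lt_iff (by simp) (by simp), cylEntropy_eq_ofReal,
    ← ENNReal.ofReal_natCast (n + 1), ← ENNReal.ofReal_mul ht.le,
    ENNReal.ofReal_lt_ofReal_iff (by positivity)] at hn
  linarith

lemma exists_frequently_mem_lowWords {μ : ProbabilityMeasure (ℕ → Bool)} {x : ℕ → Bool} {t : ℝ}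
    (h : cylRate (μ : Measure (ℕ → Bool)) < ENNReal.ofReal t)
    (hx : MapClusterPt μ atTop fun n => empProb x n) :
    ∃ k, ∃ᶠ n in atTop, pre (k + (n + 1)) x ∈ lowWords k n t := by
  obtain ⟨k, hk⟩ := exists_cylEntropyReal_sub_lt _ h
  refine ⟨k, (hx.frequently (((continuous_cylEntropyReal (k + 1)).sub
    (continuous_cylEntropyReal k)).continuousAt.eventually_lt continuousAt_const hk)).mono
    fun n hn => ?_⟩
  change cylEntropyReal (empMeasure x n) (k + 1) - cylEntropyReal (empMeasure x n) k < t at hn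
  refine Finset.mem_filter.2 ⟨Finset.mem_univ _, ?_⟩
  have hpre : pre (k + (n + 1)) (padWord (pre (k + (n + 1)) x)) = pre (k + (n + 1)) x :=
    pre_padWord _
  rw [blockType_congr hpre, pathWeight_congr _ hpre, pathWeight_blockType, Real.exp_le_exp]
  have : (0 : ℝ) < (n + 1 : ℕ) := by positivity
  nlinarith

lemma tsum_card_lowWords_ne_top (k K : ℕ) {s t : ℝ} (hts : t < s) :
    ∑' n, ((lowWords k (n + K) t).card : ℝ≥0∞) *
      ENNReal.ofReal (Real.exp (-s * ((n + 1 : ℕ) : ℝ))) ≠ ∞ := by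
  have hr : 0 < s - t := sub_pos.2 hts
  have hsum := ((summable_nat_add_iff (K + 2)).2
    (Real.summable_pow_mul_exp_neg_nat_mul (2 ^ (k + 1)) hr)).mul_left
      (2 ^ k * Real.exp (s * K) * Real.exp (s - t))
  refine ne_top_of_le_ne_top hsum.tsum_ofReal_ne_top (ENNReal.tsum_le_tsum fun n => ?_)
  rw [← ENNReal.ofReal_natCast, ← ENNReal.ofReal_mul (Nat.cast_nonneg _)]
  refine ENNReal.ofReal_le_ofReal ?_
  refine (mul_le_mul_of_nonneg_right (card_lowWords_le k (n + K) t) (Real.exp_pos _).le).trans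
    (le_of_eq ?_)
  have hexp : Real.exp ((n + K + 1 : ℕ) * t) * Real.exp (-s * ((n + 1 : ℕ) : ℝ)) =
      Real.exp (s * K) * Real.exp (s - t) * Real.exp (-(s - t) * ((n + (K + 2) : ℕ) : ℝ)) := by
    rw [← Real.exp_add, ← Real.exp_add, ← Real.exp_add]
    congr 1
    push_cast
    ring
  rw [show n + K + 2 = n + (K + 2) by ring]
  linear_combination ((n + (K + 2) : ℕ) : ℝ) ^ (2 ^ (k + 1)) * 2 ^ k * hexp

lemma bowenH_eq_zero {Z : Set (ℕ → Bool)} {s t ε : ℝ} (hts : t < s)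
    (hZ : ∀ x ∈ Z, ∃ k, ∃ᶠ n in atTop, pre (k + (n + 1)) x ∈ lowWords k n t) (hε : 0 < ε)
    (N : ℕ) : bowenH shift Z s ε N = 0 := by
  obtain ⟨K, hK⟩ := exists_pow_lt_of_lt_one hε (by norm_num : (1 / 2 : ℝ) < 1)
  rw [← nonpos_iff_eq_zero]
  refine le_of_forall_gt fun δ hδ => ?_
  obtain ⟨δ', hδ', hsum⟩ := ENNReal.exists_pos_sum_of_countable' hδ.ne' ℕ
  have hM (k : ℕ) : ∃ M, N ≤ M ∧ ∑' n, ((lowWords k (n + M + K) t).card : ℝ≥0∞) *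
      ENNReal.ofReal (Real.exp (-s * ((n + M + 1 : ℕ) : ℝ))) < δ' k :=
    ((eventually_ge_atTop N).and ((ENNReal.tendsto_sum_nat_add _
      (tsum_card_lowWords_ne_top k K hts)).eventually_lt_const (hδ' k))).exists
  choose M hNM hM using hM
  refine lt_of_le_of_lt (bowenH_shift_le_tsum hK
    (ι := Σ k : ℕ, Σ n : ℕ, lowWords k (n + M k + K) t)
    (fun i => padWord (i.2.2 : Fin (i.1 + (i.2.1 + M i.1 + K + 1)) → Bool))
    (fun i => i.2.1 + M i.1 + 1) (fun i => ?_) fun x hx => ?_) (lt_of_le_of_lt ?_ hsum)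
  · have := hNM i.1
    omega
  · obtain ⟨k, hk⟩ := hZ x hx
    obtain ⟨m, hm, hmem⟩ := frequently_atTop.1 hk (M k + K)
    obtain ⟨n, rfl⟩ : ∃ n, m = n + M k + K := ⟨m - (M k + K), by omega⟩
    refine ⟨⟨k, n, _, hmem⟩, fun j hj => ?_⟩
    refine (pre_eq_pre_iff.1 (pre_padWord (pre (k + (n + M k + K + 1)) x)) j ?_).symm
    dsimp only at hj
    omega
  · rw [ENNReal.tsum_sigma']
    refine ENNReal.tsum_le_tsum fun k => ?_
    rw [ENNReal.tsum_sigma']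
    refine le_trans (le_of_eq ?_) (hM k).le
    refine tsum_congr fun n => ?_
    dsimp only
    rw [tsum_fintype, Finset.sum_const, nsmul_eq_mul, Finset.card_univ, Fintype.card_coe]

theorem bowenEntropy_le (I : Set ℕ) (w : ℕ → List Bool) (a : ℕ → ℝ) :
    bowenEntropy shift {x : ℕ → Bool | ∀ i ∈ I, hasFreq (w i) x (a i)} ≤
      ⨆ μ ∈ invariantWith I w a, cylRate (μ : Measure (ℕ → Bool)) := by
  refine le_of_forall_gt fun c hc => ?_
  obtain ⟨t, ht, htc⟩ := ENNReal.lt_iff_exists_nnreal_btwn.1 hc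
  obtain ⟨s, hts, hsc⟩ := ENNReal.lt_iff_exists_nnreal_btwn.1 htc
  refine lt_of_le_of_lt (iSup₂_le fun ε hε => sInf_le ⟨s, ?_, rfl⟩) hsc
  rw [Set.mem_ofPred_eq, ENNReal.iSup_eq_zero]
  refine bowenH_eq_zero (t := t) (by exact_mod_cast hts) (fun x hx => ?_) hε
  obtain ⟨μ, hμ, hcl⟩ := exists_mapClusterPt_empMeasure hx
  refine exists_frequently_mem_lowWords (lt_of_le_of_lt ?_ ht |>.trans_eq
    (ENNReal.ofReal_coe_nnreal (p := t)).symm) hcl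
  exact le_iSup₂ (f := fun (μ : ProbabilityMeasure (ℕ → Bool)) (_ : μ ∈ invariantWith I w a) =>
    cylRate (μ : Measure (ℕ → Bool))) μ hμ

end UpperBound

section StrongLaw

variable {Ω : Type*} [MeasurableSpace Ω] {P : Measure Ω} {X : ℕ → Ω → ℝ} {c : ℕ → ℝ≥0}

lemma ae_eventually_sum_lt_of_subgaussian [IsProbabilityMeasure P]
    (hind : ProbabilityTheory.iIndepFun X P)
    (hX : ∀ j, ProbabilityTheory.HasSubgaussianMGF (X j) (c j) P) (hc0 : ∀ j, 0 < c j)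
    (hc : ∀ j : ℕ, (c j : ℝ) ≤ ((j : ℝ) + 1) ^ 2) {ε : ℝ} (hε : 0 < ε) :
    ∀ᵐ ω ∂P, ∀ᶠ i : ℕ in atTop, ∑ j ∈ Finset.range i, X j ω < ε * (i : ℝ) ^ 2 := by
  have hbound (i : ℕ) : P.real {ω | ε * (i : ℝ) ^ 2 ≤ ∑ j ∈ Finset.range i, X j ω} ≤
      Real.exp (i * (-(ε ^ 2 / 2))) := by
    refine (ProbabilityTheory.HasSubgaussianMGF.measure_sum_ge_le_of_iIndepFun hind
      (fun j _ => hX j) (by positivity)).trans (Real.exp_le_exp.2 ?_)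
    rcases Nat.eq_zero_or_pos i with rfl | hi
    · simp
    have hi' : (0 : ℝ) < i := by exact_mod_cast hi
    have hpos : (0 : ℝ) < ((∑ j ∈ Finset.range i, c j : ℝ≥0) : ℝ) := by
      exact_mod_cast Finset.sum_pos (fun j _ => hc0 j) ⟨0, Finset.mem_range.2 hi⟩
    have hsum : ((∑ j ∈ Finset.range i, c j : ℝ≥0) : ℝ) ≤ i * (i : ℝ) ^ 2 := by
      rw [NNReal.coe_sum]
      refine (Finset.sum_le_card_nsmul _ _ ((i : ℝ) ^ 2) fun j hj => (hc j).trans ?_).trans ?_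
      · have : ((j : ℝ) + 1) ≤ i := by exact_mod_cast Finset.mem_range.1 hj
        gcongr
      · simp
    rw [div_le_iff₀ (by positivity)]
    have := mul_le_mul_of_nonneg_left hsum (by positivity : 0 ≤ (i : ℝ) * ε ^ 2)
    nlinarith
  have hsummable : Summable fun i : ℕ => Real.exp (i * (-(ε ^ 2 / 2))) :=
    Real.summable_exp_nat_mul_iff.2 (by have := pow_pos hε 2; linarith)
  filter_upwards [ae_eventually_notMem (μ := P)
    (s := fun i : ℕ => {ω | ε * (i : ℝ) ^ 2 ≤ ∑ j ∈ Finset.range i, X j ω})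
    (ne_top_of_le_ne_top hsummable.tsum_ofReal_ne_top (ENNReal.tsum_le_tsum fun i =>
      (ENNReal.le_ofReal_iff_toReal_le (measure_ne_top _ _) (Real.exp_pos _).le).2
        (hbound i)))] with ω hω
  filter_upwards [hω] with i hi
  exact not_le.1 hi

lemma ae_tendsto_sum_div_sq_of_subgaussian [IsProbabilityMeasure P]
    (hind : ProbabilityTheory.iIndepFun X P)
    (hX : ∀ j, ProbabilityTheory.HasSubgaussianMGF (X j) (c j) P) (hc0 : ∀ j, 0 < c j)
    (hc : ∀ j : ℕ, (c j : ℝ) ≤ ((j : ℝ) + 1) ^ 2) :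
    ∀ᵐ ω ∂P, Tendsto (fun i : ℕ => (∑ j ∈ Finset.range i, X j ω) / (i : ℝ) ^ 2) atTop (𝓝 0) := by
  have hneg : ProbabilityTheory.iIndepFun (fun j => -X j) P :=
    hind.comp (fun _ y => -y) fun _ => measurable_neg
  have h (m : ℕ) := (ae_eventually_sum_lt_of_subgaussian hind hX hc0 hc
    (ε := 1 / ((m : ℝ) + 1)) (by positivity)).and (ae_eventually_sum_lt_of_subgaussian hneg
      (fun j => (hX j).neg) hc0 hc (ε := 1 / ((m : ℝ) + 1)) (by positivity))
  filter_upwards [ae_all_iff.2 h] with ω hω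
  rw [Metric.tendsto_nhds]
  intro ε hε
  obtain ⟨m, hm⟩ := exists_nat_one_div_lt hε
  filter_upwards [(hω m).1, (hω m).2, eventually_gt_atTop 0] with i h1 h2 hi
  have hi' : (0 : ℝ) < (i : ℝ) ^ 2 := by positivity
  simp only [Pi.neg_apply, Finset.sum_neg_distrib] at h2
  refine lt_trans ?_ hm
  rw [dist_zero_right, Real.norm_eq_abs, abs_lt, lt_div_iff₀ hi', div_lt_iff₀ hi']
  exact ⟨by linarith, h1⟩

lemma ae_tendsto_sum_sub_integral_div_sq {Y : Type*} [MeasurableSpace Y] (μ : Measure Y)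
    [IsProbabilityMeasure μ] {f : ℕ → Y → ℝ} (hf : ∀ j, Measurable (f j))
    (hbd : ∀ (j : ℕ) y, f j y ∈ Icc (0 : ℝ) (2 * j + 1)) :
    ∀ᵐ ω ∂Measure.infinitePi (fun _ : ℕ => μ),
      Tendsto (fun i : ℕ => (∑ j ∈ Finset.range i, (f j (ω j) - ∫ y, f j y ∂μ)) / (i : ℝ) ^ 2)
        atTop (𝓝 0) := by
  refine ae_tendsto_sum_div_sq_of_subgaussian
    (c := fun j => (‖(2 * j + 1 : ℝ) - 0‖₊ / 2) ^ 2) ?_ (fun j => ?_) (fun j => ?_) fun j => ?_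
  · exact ProbabilityTheory.iIndepFun_infinitePi (X := fun j y => f j y - ∫ y, f j y ∂μ)
      fun j => (hf j).sub_const _
  · have hmp := measurePreserving_eval_infinitePi (fun _ : ℕ => μ) j
    have h := ProbabilityTheory.hasSubgaussianMGF_of_mem_Icc (X := fun ω : ℕ → Y => f j (ω j))
      (μ := Measure.infinitePi (fun _ : ℕ => μ)) (a := 0) (b := 2 * j + 1)
      ((hf j).comp (measurable_pi_apply j)).aemeasurable (ae_of_all _ fun ω => hbd j _)
    have h_integral : ∫ ω, f j (ω j) ∂Measure.infinitePi (fun _ : ℕ => μ) = ∫ y, f j y ∂μ := by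
      have hmap := integral_map (μ := Measure.infinitePi (fun _ : ℕ => μ))
        hmp.measurable.aemeasurable (hf j).aestronglyMeasurable
      rw [hmp.map_eq] at hmap
      exact hmap.symm
    rwa [h_integral] at h
  · have : (2 * j + 1 : ℝ) - 0 ≠ 0 := by
      rw [sub_zero]
      positivity
    have := nnnorm_pos.2 this
    positivity
  · have : ‖(2 * j + 1 : ℝ)‖ = 2 * j + 1 := Real.norm_of_nonneg (by positivity)
    push_cast
    rw [sub_zero, this]
    gcongr
    linarith

end StrongLaw

section MassDistribution

lemma le_bowenEntropy_shift {Z : Set (ℕ → Bool)} (ν : Measure (ℕ → Bool)) {s : ℝ≥0}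
    (h : ν {x ∈ Z | ∀ᶠ n : ℕ in atTop,
      ν (pre n ⁻¹' {pre n x}) ≤ ENNReal.ofReal (Real.exp (-s * n))} ≠ 0) :
    (s : ℝ≥0∞) ≤ bowenEntropy shift Z := by
  refine le_trans (le_sInf ?_) (le_iSup₂ (f := fun (ε : ℝ) (_ : 0 < ε) =>
    bowenEntropyRes shift Z ε) 1 one_pos)
  rintro _ ⟨s', hs', rfl⟩
  rw [Set.mem_ofPred_eq, ENNReal.iSup_eq_zero] at hs'
  by_contra! hlt
  have hlt' : (s' : ℝ) ≤ s := by exact_mod_cast hlt.le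
  refine h ?_
  set A : ℕ → Set (ℕ → Bool) := fun N => {x ∈ Z | ∀ n ≥ N,
    ν (pre n ⁻¹' {pre n x}) ≤ ENNReal.ofReal (Real.exp (-s * n))} with hA
  refine measure_mono_null (t := ⋃ N, A N) (fun x hx => ?_) (measure_iUnion_null fun N => ?_)
  · obtain ⟨N, hN⟩ := eventually_atTop.1 hx.2
    exact mem_iUnion.2 ⟨N, hx.1, hN⟩
  rw [← nonpos_iff_eq_zero, ← hs' N]
  unfold bowenH
  refine le_iInf fun C => le_iInf fun hC => le_iInf fun hCN => le_iInf fun hCZ => ?_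
  calc ν (A N) ≤ ν (⋃ p ∈ C, A N ∩ bowenBall shift p.1 p.2 1) := by
        refine measure_mono fun x hx => ?_
        obtain ⟨p, hp, hxp⟩ := mem_iUnion₂.1 (hCZ hx.1)
        exact mem_iUnion₂.2 ⟨p, hp, hx, hxp⟩
    _ ≤ ∑' p : C, ν (A N ∩ bowenBall shift (p : (ℕ → Bool) × ℕ).1 (p : (ℕ → Bool) × ℕ).2 1) :=
        measure_biUnion_le ν hC _
    _ ≤ _ := ENNReal.tsum_le_tsum fun p => ?_
  obtain ⟨⟨c, n⟩, hp⟩ := p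
  rcases eq_empty_or_nonempty (A N ∩ bowenBall shift c n 1) with he | ⟨x, hx, hxc⟩
  · simp [he]
  refine (measure_mono (t := pre n ⁻¹' {pre n x}) ?_).trans ((hx.2 n (hCN _ hp)).trans ?_)
  · rintro y ⟨-, hy⟩
    refine pre_eq_pre_iff.2 fun i hi => ?_
    rw [← eq_of_mem_bowenBall_shift_one hy hi, ← eq_of_mem_bowenBall_shift_one hxc hi]
  · refine ENNReal.ofReal_le_ofReal (Real.exp_le_exp.2 ?_)
    have := mul_le_mul_of_nonneg_right hlt' (Nat.cast_nonneg (α := ℝ) n)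
    simp only
    linarith

end MassDistribution

section Concatenation

/-- The concatenation of the initial words of lengths `1, 3, 5, …` of a sequence of points. -/
def concat (ω : ℕ → ℕ → Bool) : ℕ → Bool := fun t => ω (Nat.sqrt t) (t - Nat.sqrt t ^ 2)

lemma measurable_concat : Measurable concat :=
  measurable_pi_iff.2 fun t =>
    (measurable_pi_apply (t - Nat.sqrt t ^ 2)).comp (measurable_pi_apply (Nat.sqrt t))

lemma concat_sq_add (ω : ℕ → ℕ → Bool) {j r : ℕ} (hr : r < 2 * j + 1) :
    concat ω (j ^ 2 + r) = ω j r := by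
  rw [concat, Nat.sqrt_add_eq' j (by omega), Nat.add_sub_cancel_left]

lemma pre_shift_concat (ω : ℕ → ℕ → Bool) {j r m : ℕ} (h : r + m ≤ 2 * j + 1) :
    pre m (shift^[j ^ 2 + r] (concat ω)) = pre m (shift^[r] (ω j)) := by
  rw [pre_eq_pre_iff]
  intro i hi
  rw [shift_iterate_apply, shift_iterate_apply, ← concat_sq_add ω (by omega)]
  congr 1
  omega

lemma visits_sq (s : Set (ℕ → Bool)) (x : ℕ → Bool) (i : ℕ) :
    visits s x (i ^ 2) = ∑ j ∈ Finset.range i, ∑ r ∈ Finset.range (2 * j + 1),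
      s.indicator (fun _ => (1 : ℝ)) (shift^[j ^ 2 + r] x) := by
  induction i with
  | zero => simp [visits]
  | succ i ih =>
    rw [Finset.sum_range_succ, ← ih, visits, show (i + 1) ^ 2 = i ^ 2 + (2 * i + 1) by ring,
      Finset.sum_range_add]
    rfl

lemma abs_visits_concat_sub_le (w : List Bool) (ω : ℕ → ℕ → Bool) (i : ℕ) :
    |visits (cyl w) (concat ω) (i ^ 2) -
      ∑ j ∈ Finset.range i, visits (cyl w) (ω j) (2 * j + 1)| ≤ i * w.length := by
  rw [visits_sq, ← Finset.sum_sub_distrib]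
  refine (Finset.abs_sum_le_sum_abs _ _).trans ((Finset.sum_le_card_nsmul _ _ (w.length : ℝ)
    fun j _ => ?_).trans (by simp))
  rw [visits, ← Finset.sum_sub_distrib]
  refine (Finset.abs_sum_le_sum_abs _ _).trans ?_
  calc _ ≤ ∑ r ∈ Finset.range (2 * j + 1), if 2 * j + 1 < r + w.length then (1 : ℝ) else 0 := by
        refine Finset.sum_le_sum fun r _ => ?_
        split_ifs with h
        · by_cases h1 : shift^[j ^ 2 + r] (concat ω) ∈ cyl w <;>
            by_cases h2 : shift^[r] (ω j) ∈ cyl w <;> simp [h1, h2]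
        · have : shift^[j ^ 2 + r] (concat ω) ∈ cyl w ↔ shift^[r] (ω j) ∈ cyl w := by
            rw [cyl_eq_preimage_pre, mem_preimage, mem_preimage, pre_shift_concat ω (by omega)]
          by_cases h1 : shift^[r] (ω j) ∈ cyl w <;> simp [this, h1]
    _ ≤ w.length := by
        rw [← Finset.sum_filter, Finset.sum_const, nsmul_eq_mul, mul_one]
        have hsub : ((Finset.range (2 * j + 1)).filter fun r => 2 * j + 1 < r + w.length) ⊆
            Finset.Ico (2 * j + 1 - w.length) (2 * j + 1) := by
          intro r hr
          simp only [Finset.mem_filter, Finset.mem_range] at hr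
          rw [Finset.mem_Ico]
          omega
        have := Finset.card_le_card hsub
        rw [Nat.card_Ico] at this
        exact_mod_cast (show _ ≤ w.length by omega)

lemma tendsto_natSqrt : Tendsto Nat.sqrt atTop atTop :=
  tendsto_atTop_atTop_of_monotone (fun _ _ h => Nat.sqrt_le_sqrt h) fun b =>
    ⟨b ^ 2, (Nat.sqrt_eq' b).ge⟩

lemma visits_add_mem_Icc (s : Set (ℕ → Bool)) (x : ℕ → Bool) (n m : ℕ) :
    visits s x (n + m) - visits s x n ∈ Icc (0 : ℝ) m := by
  rw [visits, visits, Finset.sum_range_add, add_sub_cancel_left]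
  refine ⟨Finset.sum_nonneg fun j _ => indicator_nonneg (fun _ _ => zero_le_one) _,
    (Finset.sum_le_card_nsmul _ _ 1 fun j _ => ?_).trans (by simp)⟩
  exact indicator_le' (fun _ _ => le_rfl) (fun _ _ => zero_le_one) _

lemma hasFreq_of_tendsto_sq {w : List Bool} {x : ℕ → Bool} {c : ℝ}
    (h : Tendsto (fun i : ℕ => visits (cyl w) x (i ^ 2) / (i : ℝ) ^ 2) atTop (𝓝 c)) :
    hasFreq w x c := by
  have hlim : Tendsto (fun i : ℕ => |visits (cyl w) x (i ^ 2) / (i : ℝ) ^ 2 - c| +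
      (2 + 2 * |c|) / (i : ℝ)) atTop (𝓝 0) := by
    have h1 := ((h.sub_const c).abs).add (tendsto_const_div_atTop_nhds_zero_nat (2 + 2 * |c|))
    simpa using h1
  change Tendsto (fun n : ℕ => visits (cyl w) x n / (n : ℝ)) atTop (𝓝 c)
  rw [tendsto_iff_dist_tendsto_zero]
  refine squeeze_zero' (Eventually.of_forall fun n => dist_nonneg) ?_
    (hlim.comp tendsto_natSqrt)
  filter_upwards [eventually_ge_atTop 1] with n hn
  set i := Nat.sqrt n with hi
  have hi1 : 1 ≤ i := Nat.sqrt_pos.2 hn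
  obtain ⟨m, hm⟩ := Nat.exists_eq_add_of_le (Nat.sqrt_le' n)
  rw [← hi] at hm
  have hm2 : m ≤ 2 * i := by
    have := Nat.sqrt_le_add n
    rw [← hi] at this
    nlinarith
  obtain ⟨h0, h1⟩ := visits_add_mem_Icc (cyl w) x (i ^ 2) m
  rw [← hm] at h0 h1
  have hi' : (0 : ℝ) < i := by exact_mod_cast hi1
  have hnR : (n : ℝ) = (i : ℝ) ^ 2 + m := by exact_mod_cast hm
  have hm2' : (m : ℝ) ≤ 2 * i := by exact_mod_cast hm2
  have hn' : (0 : ℝ) < n := by exact_mod_cast hn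
  have hsq : (i : ℝ) ^ 2 ≤ n := by rw [hnR]; simp
  have key : |visits (cyl w) x n - c * n| ≤
      |visits (cyl w) x (i ^ 2) - c * (i : ℝ) ^ 2| + (2 + 2 * |c|) * i := by
    have e : visits (cyl w) x n - c * n = (visits (cyl w) x (i ^ 2) - c * (i : ℝ) ^ 2) +
        ((visits (cyl w) x n - visits (cyl w) x (i ^ 2)) + -(c * m)) := by
      rw [hnR]
      ring
    rw [e]
    refine (abs_add_le _ _).trans (add_le_add_right ((abs_add_le _ _).trans ?_) _)
    rw [abs_of_nonneg h0, abs_neg, abs_mul, Nat.abs_cast]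
    nlinarith [abs_nonneg c]
  calc dist (visits (cyl w) x n / (n : ℝ)) c = |visits (cyl w) x n - c * n| / n := by
        rw [Real.dist_eq, ← abs_of_pos hn', ← abs_div, abs_of_pos hn']
        congr 1
        field_simp
    _ ≤ (|visits (cyl w) x (i ^ 2) - c * (i : ℝ) ^ 2| + (2 + 2 * |c|) * i) / (i : ℝ) ^ 2 := by
        gcongr
    _ = _ := by
        simp only [Function.comp_apply, ← hi]
        rw [add_div, ← abs_of_pos (pow_pos hi' 2), ← abs_div, abs_of_pos (pow_pos hi' 2)]
        congr 1
        · congr 1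
          field_simp
        · field_simp

lemma integral_visits (μ : Measure (ℕ → Bool)) [IsProbabilityMeasure μ]
    (hμ : MeasurePreserving shift μ μ) {s : Set (ℕ → Bool)} (hs : MeasurableSet s) (n : ℕ) :
    ∫ x, visits s x n ∂μ = n * μ.real s := by
  have h (j : ℕ) : (fun x => s.indicator (fun _ => (1 : ℝ)) (shift^[j] x)) =
      (shift^[j] ⁻¹' s).indicator fun _ => (1 : ℝ) := rfl
  have hm (j : ℕ) : MeasurableSet (shift^[j] ⁻¹' s) := (hμ.iterate j).measurable hs
  simp only [visits]
  rw [integral_finsetSum]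
  · simp only [h, integral_indicator_const _ (hm _), smul_eq_mul, mul_one,
      (hμ.iterate _).measureReal_preimage hs.nullMeasurableSet]
    simp
  · intro j _
    rw [h]
    exact (integrable_const 1).indicator (hm j)

lemma measurable_visits {s : Set (ℕ → Bool)} (hs : MeasurableSet s) (n : ℕ) :
    Measurable fun x => visits s x n :=
  Finset.measurable_fun_sum _ fun j _ =>
    (measurable_const.indicator hs).comp (measurable_shift.iterate j)

lemma ae_hasFreq_concat (μ : Measure (ℕ → Bool)) [IsProbabilityMeasure μ]
    (hμ : MeasurePreserving shift μ μ) (w : List Bool) :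
    ∀ᵐ ω ∂Measure.infinitePi (fun _ : ℕ => μ), hasFreq w (concat ω) (μ.real (cyl w)) := by
  have hs : MeasurableSet (cyl w) := (isClopen_cyl w).isOpen.measurableSet
  filter_upwards [ae_tendsto_sum_sub_integral_div_sq μ
    (f := fun j x => visits (cyl w) x (2 * j + 1)) (fun j => measurable_visits hs _)
    fun j x => by simpa [visits] using visits_add_mem_Icc (cyl w) x 0 (2 * j + 1)] with ω hω
  refine hasFreq_of_tendsto_sq ?_
  set c := μ.real (cyl w)
  have hsum (i : ℕ) : ∑ j ∈ Finset.range i, ∫ x, visits (cyl w) x (2 * j + 1) ∂μ =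
      c * (i : ℝ) ^ 2 := by
    induction i with
    | zero => simp
    | succ i ih =>
      rw [Finset.sum_range_succ, ih, integral_visits μ hμ hs]
      push_cast
      ring
  have herr : Tendsto (fun i : ℕ => (visits (cyl w) (concat ω) (i ^ 2) -
      ∑ j ∈ Finset.range i, visits (cyl w) (ω j) (2 * j + 1)) / (i : ℝ) ^ 2) atTop (𝓝 0) := by
    refine squeeze_zero_norm' ?_ (tendsto_const_div_atTop_nhds_zero_nat (w.length : ℝ))
    filter_upwards [eventually_ge_atTop 1] with i hi
    have hi' : (0 : ℝ) < i := by exact_mod_cast hi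
    rw [norm_div, Real.norm_eq_abs, Real.norm_of_nonneg (by positivity : 0 ≤ (i : ℝ) ^ 2),
      div_le_div_iff₀ (by positivity) hi']
    nlinarith [abs_visits_concat_sub_le w ω i]
  have h := (herr.add hω).add_const c
  rw [add_zero, zero_add] at h
  refine h.congr' ?_
  filter_upwards [eventually_ge_atTop 1] with i hi
  have hi' : (0 : ℝ) < i := by exact_mod_cast hi
  rw [Finset.sum_sub_distrib, hsum]
  field_simp
  ring

end Concatenation

section LowerBound

/-- The information content of the first `n` letters, truncated at `n`. -/
noncomputable def info (μ : Measure (ℕ → Bool)) (n : ℕ) (y : ℕ → Bool) : ℝ :=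
  min (-Real.log (μ.real (pre n ⁻¹' {pre n y}))) n

lemma measurable_info (μ : Measure (ℕ → Bool)) (n : ℕ) : Measurable (info μ n) :=
  (measurable_of_finite fun u : Fin n → Bool =>
    min (-Real.log (μ.real (pre n ⁻¹' {u}))) (n : ℝ)).comp (measurable_pre n)

lemma measureReal_le_exp_neg_info (μ : Measure (ℕ → Bool)) (n : ℕ) (y : ℕ → Bool) :
    μ.real (pre n ⁻¹' {pre n y}) ≤ Real.exp (-info μ n y) := by
  rcases eq_or_lt_of_le (measureReal_nonneg (μ := μ) (s := pre n ⁻¹' {pre n y})) with h | h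
  · rw [← h]
    exact (Real.exp_pos _).le
  · conv_lhs => rw [← Real.exp_log h]
    rw [Real.exp_le_exp]
    exact le_neg_of_le_neg (min_le_left (-Real.log (μ.real (pre n ⁻¹' {pre n y}))) (n : ℝ))

variable (μ : Measure (ℕ → Bool)) [IsProbabilityMeasure μ]

lemma info_mem_Icc (n : ℕ) (y : ℕ → Bool) : info μ n y ∈ Icc (0 : ℝ) n :=
  ⟨le_min (neg_nonneg.2 (Real.log_nonpos measureReal_nonneg measureReal_le_one))
    (Nat.cast_nonneg n), min_le_right _ _⟩

lemma negMulLog_le_mul_min {p L : ℝ} (hp : 0 ≤ p) :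
    Real.negMulLog p ≤ p * min (-Real.log p) L + Real.exp (-L) := by
  rcases le_total (-Real.log p) L with h | h
  · rw [min_eq_left h, Real.negMulLog]
    linarith [Real.exp_pos (-L)]
  · rw [min_eq_right h, Real.negMulLog]
    rcases eq_or_lt_of_le hp with rfl | hp
    · simpa using (Real.exp_pos (-L)).le
    have h1 := Real.one_sub_inv_le_log_of_pos (mul_pos hp (Real.exp_pos L))
    rw [Real.log_mul hp.ne' (Real.exp_pos L).ne', Real.log_exp, mul_inv, ← Real.exp_neg] at h1
    have h2 := mul_le_mul_of_nonneg_left h1 hp.le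
    have h3 : p * (1 - p⁻¹ * Real.exp (-L)) = p - Real.exp (-L) := by field_simp
    linarith

lemma cylEntropyReal_le_integral_info (n : ℕ) : cylEntropyReal μ n ≤ ∫ y, info μ n y ∂μ + 1 := by
  have h_integral : ∫ y, info μ n y ∂μ = ∑ u : Fin n → Bool,
      μ.real (pre n ⁻¹' {u}) * min (-Real.log (μ.real (pre n ⁻¹' {u}))) n := by
    have hprob := Measure.isProbabilityMeasure_map (μ := μ) (measurable_pre n).aemeasurable
    have h := integral_map (μ := μ) (measurable_pre n).aemeasurable (measurable_of_finite
      fun u : Fin n → Bool => min (-Real.log (μ.real (pre n ⁻¹' {u}))) (n : ℝ)).aestronglyMeasurable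
    refine h.symm.trans ?_
    rw [integral_fintype .of_finite]
    refine Finset.sum_congr rfl fun u _ => ?_
    rw [map_measureReal_apply (measurable_pre n) (measurableSet_singleton u), smul_eq_mul]
  have hexp : ∑ _u : Fin n → Bool, Real.exp (-(n : ℝ)) ≤ 1 := by
    have h2 : (2 : ℝ) ^ n ≤ Real.exp n := by
      rw [← Real.exp_one_pow]
      gcongr
      linarith [Real.add_one_le_exp 1]
    rw [Finset.sum_const, nsmul_eq_mul, Real.exp_neg]
    simpa using mul_inv_le_one_of_le₀ h2 (Real.exp_pos _).le
  rw [h_integral]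
  refine (Finset.sum_le_sum fun u _ => negMulLog_le_mul_min (L := n) measureReal_nonneg).trans ?_
  rw [Finset.sum_add_distrib]
  gcongr

lemma map_concat_pre_le (ω : ℕ → ℕ → Bool) (n : ℕ) :
    (Measure.infinitePi fun _ : ℕ => μ).map concat (pre n ⁻¹' {pre n (concat ω)}) ≤
      ENNReal.ofReal (Real.exp (-∑ j ∈ Finset.range (Nat.sqrt n), info μ (2 * j + 1) (ω j))) := by
  have hm (m : ℕ) (B : Set (Fin m → Bool)) : MeasurableSet (pre m ⁻¹' B) :=
    (isClopen_preimage_pre m B).isOpen.measurableSet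
  rw [Measure.map_apply measurable_concat (hm _ _)]
  calc _ ≤ Measure.infinitePi (fun _ : ℕ => μ) ((Finset.range (Nat.sqrt n) : Set ℕ).pi fun j =>
        pre (2 * j + 1) ⁻¹' {pre (2 * j + 1) (ω j)}) := by
        refine measure_mono fun ω' hω' j hj => pre_eq_pre_iff.2 fun r hr => ?_
        have hj : j < Nat.sqrt n := Finset.mem_range.1 hj
        rw [← concat_sq_add ω hr, ← concat_sq_add ω' hr]
        refine pre_eq_pre_iff.1 hω' _ ?_
        have := Nat.sqrt_le' n
        nlinarith
    _ = ∏ j ∈ Finset.range (Nat.sqrt n), μ (pre (2 * j + 1) ⁻¹' {pre (2 * j + 1) (ω j)}) :=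
        Measure.infinitePi_pi _ fun j _ => hm _ _
    _ ≤ ∏ j ∈ Finset.range (Nat.sqrt n),
        ENNReal.ofReal (Real.exp (-info μ (2 * j + 1) (ω j))) := by
        refine Finset.prod_le_prod' fun j _ => ?_
        rw [ENNReal.le_ofReal_iff_toReal_le (measure_ne_top _ _) (Real.exp_pos _).le]
        exact measureReal_le_exp_neg_info μ _ _
    _ = _ := by
        rw [← ENNReal.ofReal_prod_of_nonneg fun _ _ => (Real.exp_pos _).le, ← Real.exp_sum,
          Finset.sum_neg_distrib]

lemma ae_eventually_le_sum_info {s : ℝ≥0} (hs : (s : ℝ≥0∞) < cylRate μ) :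
    ∀ᵐ ω ∂Measure.infinitePi (fun _ : ℕ => μ), ∀ᶠ n : ℕ in atTop,
      (s : ℝ) * n ≤ ∑ j ∈ Finset.range (Nat.sqrt n), info μ (2 * j + 1) (ω j) := by
  obtain ⟨t, hst, ht⟩ := ENNReal.lt_iff_exists_nnreal_btwn.1 hs
  have hst' : (s : ℝ) < t := by exact_mod_cast hst
  have hent (n : ℕ) : (t : ℝ) * n ≤ cylEntropyReal μ n := by
    have h1 : (t : ℝ≥0∞) * n ≤ cylEntropy μ n :=
      (mul_le_mul_left ht.le _).trans (cylRate_mul_le μ n)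
    have h0 : 0 ≤ cylEntropyReal μ n := Finset.sum_nonneg fun u _ =>
      Real.negMulLog_nonneg measureReal_nonneg measureReal_le_one
    rw [cylEntropy_eq_ofReal, ← ENNReal.toReal_le_toReal (by finiteness) (by finiteness),
      ENNReal.toReal_ofReal h0] at h1
    simpa using h1
  have hsum (i : ℕ) : t * (i : ℝ) ^ 2 - i ≤
      ∑ j ∈ Finset.range i, ∫ y, info μ (2 * j + 1) y ∂μ := by
    induction i with
    | zero => simp
    | succ i ih =>
      rw [Finset.sum_range_succ]
      have h1 := (hent (2 * i + 1)).trans (cylEntropyReal_le_integral_info μ (2 * i + 1))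
      push_cast at h1 ⊢
      nlinarith
  filter_upwards [ae_tendsto_sum_sub_integral_div_sq μ (f := fun j => info μ (2 * j + 1))
    (fun j => measurable_info μ _) fun j y => by
      simpa using info_mem_Icc μ (2 * j + 1) y] with ω hω
  have hlim : Tendsto (fun i : ℕ => (∑ j ∈ Finset.range i, (info μ (2 * j + 1) (ω j) -
      ∫ y, info μ (2 * j + 1) y ∂μ)) / (i : ℝ) ^ 2 - (1 + 2 * s) / (i : ℝ)) atTop (𝓝 0) := by
    simpa using hω.sub (tendsto_const_div_atTop_nhds_zero_nat (1 + 2 * (s : ℝ)))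
  have hev := (hlim.eventually_const_lt (by linarith : (s : ℝ) - t < 0)).and
    (eventually_gt_atTop 0)
  filter_upwards [tendsto_natSqrt.eventually hev] with n hn
  obtain ⟨h1, hi⟩ := hn
  set i := Nat.sqrt n with hi_def
  have hi' : (0 : ℝ) < i := by exact_mod_cast hi
  have hn : (n : ℝ) ≤ (i : ℝ) ^ 2 + 2 * i := by
    have := Nat.sqrt_le_add n
    rw [← hi_def] at this
    have : (n : ℝ) ≤ i * i + i + i := by exact_mod_cast this
    linarith
  have h2 := mul_lt_mul_of_pos_right h1 (pow_pos hi' 2)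
  rw [Finset.sum_sub_distrib, sub_mul, sub_mul, div_mul_cancel₀ _ (by positivity),
    show (1 + 2 * (s : ℝ)) / i * (i : ℝ) ^ 2 = (1 + 2 * s) * i by field_simp] at h2
  have h3 := mul_le_mul_of_nonneg_left hn s.coe_nonneg
  linarith [hsum i]

theorem cylRate_le_bowenEntropy {I : Set ℕ} {w : ℕ → List Bool} {a : ℕ → ℝ}
    (hμ : MeasurePreserving shift μ μ) (hw : ∀ i ∈ I, μ.real (cyl (w i)) = a i) :
    cylRate μ ≤ bowenEntropy shift {x : ℕ → Bool | ∀ i ∈ I, hasFreq (w i) x (a i)} := by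
  refine le_of_forall_lt fun c hc => ?_
  obtain ⟨s, hcs, hs⟩ := ENNReal.lt_iff_exists_nnreal_btwn.1 hc
  refine lt_of_lt_of_le hcs
    (le_bowenEntropy_shift ((Measure.infinitePi fun _ : ℕ => μ).map concat) ?_)
  have hfreq : ∀ᵐ ω ∂Measure.infinitePi (fun _ : ℕ => μ),
      ∀ i, hasFreq (w i) (concat ω) (μ.real (cyl (w i))) :=
    ae_all_iff.2 fun i => ae_hasFreq_concat μ hμ (w i)
  have hae : ∀ᵐ ω ∂Measure.infinitePi (fun _ : ℕ => μ), concat ω ∈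
      {x ∈ {x : ℕ → Bool | ∀ i ∈ I, hasFreq (w i) x (a i)} | ∀ᶠ n : ℕ in atTop,
        (Measure.infinitePi fun _ : ℕ => μ).map concat (pre n ⁻¹' {pre n x}) ≤
          ENNReal.ofReal (Real.exp (-s * n))} := by
    filter_upwards [hfreq, ae_eventually_le_sum_info μ hs] with ω h1 h2
    refine ⟨fun i hi => hw i hi ▸ h1 i, ?_⟩
    filter_upwards [h2] with n hn
    refine (map_concat_pre_le μ ω n).trans (ENNReal.ofReal_le_ofReal (Real.exp_le_exp.2 ?_))
    linarith
  exact fun h => frequently_ae_iff.1 hae.frequently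
    (measure_mono_null (fun _ h => h) (le_zero_iff.1 ((Measure.le_map_apply
      measurable_concat.aemeasurable _).trans h.le)))

end LowerBound

section Variational

lemma iSup_ksEntropy_eq (I : Set ℕ) (w : ℕ → List Bool) (a : ℕ → ℝ) :
    (⨆ μ ∈ {μ : Measure (ℕ → Bool) | IsProbabilityMeasure μ ∧
      MeasurePreserving shift μ μ ∧ ∀ i ∈ I, (μ (cyl (w i))).toReal = a i}, ksEntropy shift μ) =
      ⨆ μ ∈ invariantWith I w a, cylRate (μ : Measure (ℕ → Bool)) := by
  refine le_antisymm (iSup₂_le fun μ ⟨hp, hμ, hw⟩ => ?_) (iSup₂_le fun μ hμ => ?_)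
  · rw [ksEntropy_eq_cylRate μ hμ]
    exact le_iSup₂_of_le (f := fun (μ : ProbabilityMeasure (ℕ → Bool))
      (_ : μ ∈ invariantWith I w a) => cylRate (μ : Measure (ℕ → Bool))) ⟨μ, hp⟩ ⟨hμ, hw⟩ le_rfl
  · rw [← ksEntropy_eq_cylRate _ hμ.1]
    exact le_iSup₂_of_le (f := fun (μ : Measure (ℕ → Bool)) (_ : μ ∈ {μ : Measure (ℕ → Bool) |
      IsProbabilityMeasure μ ∧ MeasurePreserving shift μ μ ∧
        ∀ i ∈ I, (μ (cyl (w i))).toReal = a i}) => ksEntropy shift μ)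
      (μ : Measure (ℕ → Bool)) ⟨inferInstance, hμ⟩ le_rfl

end Variational

/-- **Corollary 5.1.** For the full shift on `{0,1}^ℕ`, a countable family of words
`(w_i)_{i∈I}` and prescribed frequencies `(a_i)_{i∈I}`, the Bowen entropy of the
recurrence set `R(a;W)` equals the supremum (a maximum, attained whenever `M(a,W) ≠ ∅`)
of `h_μ` over invariant probability measures with `μ([w_i]) = a_i` for all `i ∈ I`. -/
theorem entropy_of_recurrence_set (I : Set ℕ) (w : ℕ → List Bool) (a : ℕ → ℝ)
    (ha : ∀ i ∈ I, 0 ≤ a i) :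
    bowenEntropy shift {x : ℕ → Bool | ∀ i ∈ I, hasFreq (w i) x (a i)} =
      (⨆ μ ∈ {μ : Measure (ℕ → Bool) | IsProbabilityMeasure μ ∧
          MeasurePreserving shift μ μ ∧ ∀ i ∈ I, (μ (cyl (w i))).toReal = a i},
        ksEntropy shift μ) ∧
    ({μ : Measure (ℕ → Bool) | IsProbabilityMeasure μ ∧
        MeasurePreserving shift μ μ ∧ ∀ i ∈ I, (μ (cyl (w i))).toReal = a i}.Nonempty →
      ∃ μ ∈ {μ : Measure (ℕ → Bool) | IsProbabilityMeasure μ ∧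
          MeasurePreserving shift μ μ ∧ ∀ i ∈ I, (μ (cyl (w i))).toReal = a i},
        ksEntropy shift μ =
          ⨆ ν ∈ {ν : Measure (ℕ → Bool) | IsProbabilityMeasure ν ∧
            MeasurePreserving shift ν ν ∧ ∀ i ∈ I, (ν (cyl (w i))).toReal = a i},
          ksEntropy shift ν) := by
  rw [iSup_ksEntropy_eq]
  refine ⟨le_antisymm (bowenEntropy_le I w a) (iSup₂_le fun μ hμ =>
    cylRate_le_bowenEntropy (μ : Measure (ℕ → Bool)) hμ.1 hμ.2), fun ⟨μ, hp, hμ, hw⟩ => ?_⟩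
  obtain ⟨ν, hν, hmax⟩ := exists_forall_cylRate_le (I := I) (w := w) (a := a) ⟨⟨μ, hp⟩, hμ, hw⟩
  refine ⟨(ν : Measure (ℕ → Bool)), ⟨inferInstance, hν⟩, ?_⟩
  rw [ksEntropy_eq_cylRate _ hν.1]
  exact le_antisymm (le_iSup₂_of_le (f := fun (μ : ProbabilityMeasure (ℕ → Bool))
    (_ : μ ∈ invariantWith I w a) => cylRate (μ : Measure (ℕ → Bool))) ν hν le_rfl)
    (iSup₂_le hmax)
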